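/- Let d ≥ 1 and fix an integer s > (d+2)d + 3. For Lebesgue-almost every α ∈ [0,1]^d there is a constant C(α) such that for all N ≥ 3, |D̄₅(α,x;N)| ≤ C(α)·log N, where D̄₅ is the 'constant part' of the remaining Fourier sum (the part of D̄₄ with no exponential factor). -/

import Mathlib

open MeasureTheory Finset

noncomputable section

/-- Distance from `y` to the nearest integer. -/
def nid (y : ℝ) : ℝ := |y - round y|

/-- The Fejér-type ratio `sin(2πt)/(2πt)`. -/
def sr (t : ℝ) : ℝ := Real.sin (2 * Real.pi * t) / (2 * Real.pi * t)

/-- `θ_i = n₁α_i − n_{i+1}`. -/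
def th {d : ℕ} (α : Fin d → ℝ) (n : Fin (d + 1) → ℤ) (i : Fin d) : ℝ :=
  (n 0 : ℝ) * α i - (n i.succ : ℝ)

/-- `g(n,α;N) = (sin(2πn₁/N²)/(2πn₁/N²))²·∏ (sin(2πθ_i)/(2πθ_i))²`. -/
def gterm (d N : ℕ) (α : Fin d → ℝ) (n : Fin (d + 1) → ℤ) : ℝ :=
  (sr ((n 0 : ℝ) / (N : ℝ) ^ 2)) ^ 2 * ∏ i : Fin d, (sr (th α n i)) ^ 2

/-- `U₄(α;N)`: `1 < |n₁| < N²/4`, each `n_{i+1}` nearest integer to `n₁α_i`, and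
`|n₁|·∏‖n₁α_i‖ > (log N)^s`. -/
def U4 (d s N : ℕ) (α : Fin d → ℝ) : Set (Fin (d + 1) → ℤ) :=
  {n | 1 < |(n 0 : ℝ)| ∧ |(n 0 : ℝ)| < (N : ℝ) ^ 2 / 4 ∧
       (∀ i : Fin d, |th α n i| = nid ((n 0 : ℝ) * α i)) ∧
       Real.log N ^ s < |(n 0 : ℝ)| * ∏ i : Fin d, nid ((n 0 : ℝ) * α i)}

/-- The `k`-th Fourier coefficient of `f` on the unit interval. -/
def fc (f : ℝ → ℝ) (k : ℤ) : ℂ :=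
  ∫ x in (0 : ℝ)..1, Complex.exp (-(2 * Real.pi * Complex.I * k * x)) * f x

theorem hasSum_sq_fc {f : ℝ → ℝ} (hf : Measurable f) {B : ℝ} (hB : ∀ x, |f x| ≤ B) :
    HasSum (fun k => ‖fc f k‖ ^ 2) (∫ x in (0 : ℝ)..1, f x ^ 2) := by
  have hL : MemLp (fun x => (f x : ℂ)) 2 (volume.restrict (Set.Ioc (0 : ℝ) 1)) := by
    refine MemLp.of_bound (Complex.measurable_ofReal.comp hf).aestronglyMeasurable B ?_
    exact Filter.Eventually.of_forall fun x => by simpa using hB x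
  have h := hasSum_sq_fourierCoeffOn (zero_lt_one) hL
  convert h using 1
  · funext k
    rw [fourierCoeffOn_eq_integral, fc]
    congr 2
    simp only [sub_zero, ne_eq, one_ne_zero, not_false_eq_true, div_self, one_smul]
    congr 1
    funext x
    rw [fourier_coe_apply]
    simp only [smul_eq_mul]
    congr 2
    push_cast
    ring
  · simp

theorem periodic_exp_mul {f : ℝ → ℝ} (hp : Function.Periodic f 1) (k : ℤ) :
    Function.Periodic
      (fun x : ℝ => Complex.exp (-(2 * Real.pi * Complex.I * k * x)) * (f x : ℂ)) 1 := by
  intro x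
  simp only [hp x]
  congr 1
  rw [Complex.exp_eq_exp_iff_exists_int]
  exact ⟨-k, by push_cast; ring⟩

theorem intervalIntegrable_exp_mul {f : ℝ → ℝ} (hf : Measurable f) {B : ℝ}
    (hB : ∀ x, |f x| ≤ B) (k : ℤ) (a b : ℝ) :
    IntervalIntegrable
      (fun x : ℝ => Complex.exp (-(2 * Real.pi * Complex.I * k * x)) * (f x : ℂ)) volume a b := by
  have hc : Continuous (fun x : ℝ => Complex.exp (-(2 * Real.pi * Complex.I * k * x))) := by
    fun_prop
  have hi : IntervalIntegrable (fun x => (f x : ℂ)) volume a b := by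
    rw [intervalIntegrable_iff]
    refine Measure.integrableOn_of_bounded (M := B) (by simp)
      (Complex.measurable_ofReal.comp hf).aestronglyMeasurable ?_
    exact Filter.Eventually.of_forall fun x => by simpa using hB x
  exact hi.continuousOn_mul hc.continuousOn

theorem fc_dilate_of_dvd {f : ℝ → ℝ} (hf : Measurable f) {B : ℝ} (hB : ∀ x, |f x| ≤ B)
    (hp : Function.Periodic f 1) {n : ℕ} (hn : 1 ≤ n) (l : ℤ) :
    fc (fun t => f (n * t)) (n * l) = fc f l := by
  have hn0 : (n : ℝ) ≠ 0 := by positivity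
  set h := fun x : ℝ => Complex.exp (-(2 * Real.pi * Complex.I * l * x)) * (f x : ℂ) with hh
  have h1 : fc (fun t => f (n * t)) (n * l) = ∫ x in (0 : ℝ)..1, h (n * x) := by
    rw [fc]
    congr 1
    funext x
    simp only [hh]
    push_cast
    congr 2
    ring
  have h2 := (periodic_exp_mul hp l).intervalIntegral_add_zsmul_eq n 0
    (fun t₁ t₂ => intervalIntegrable_exp_mul hf hB l t₁ t₂)
  rw [h1, intervalIntegral.integral_comp_mul_left h hn0]
  simp only [zero_add, zsmul_eq_mul, mul_one, Int.cast_natCast] at h2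
  simp only [mul_zero, mul_one, hh]
  rw [h2, fc]
  have hnc : (n : ℂ) ≠ 0 := by exact_mod_cast hn0
  rw [← Complex.coe_smul]
  simp [hnc]

theorem fc_dilate_of_not_dvd {f : ℝ → ℝ} (hp : Function.Periodic f 1) {n : ℕ} (hn : 1 ≤ n)
    {k : ℤ} (hk : ¬ (n : ℤ) ∣ k) :
    fc (fun t => f (n * t)) k = 0 := by
  have hn0 : (n : ℂ) ≠ 0 := by
    have : n ≠ 0 := by omega
    exact_mod_cast this
  have hnr : (n : ℝ) ≠ 0 := by positivity
  have hp' : Function.Periodic (fun t : ℝ => f (n * t)) 1 := by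
    intro x
    have := hp.nat_mul n (n * x)
    simp only [mul_one] at this
    simp only [mul_add, mul_one, this]
  set G := fun x : ℝ => Complex.exp (-(2 * Real.pi * Complex.I * k * x)) * (f (n * x) : ℂ) with hG
  have hper : Function.Periodic G 1 := periodic_exp_mul hp' k
  set ω := Complex.exp (-(2 * Real.pi * Complex.I * k / n)) with hω
  have hshift : ∀ x : ℝ, G (x + 1 / n) = ω * G x := by
    intro x
    simp only [hG, hω]
    rw [← mul_assoc, ← Complex.exp_add]
    congr 2
    · push_cast
      field_simp
      ring
    · have : (n : ℝ) * (x + 1 / n) = n * x + 1 := by field_simp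
      rw [this, hp]
  have h1 : ∫ x in (0 : ℝ)..1, G (x + 1 / n) = ∫ x in (0 : ℝ)..1, G x := by
    rw [intervalIntegral.integral_comp_add_right]
    have := hper.intervalIntegral_add_eq (1 / n) 0
    simp only [zero_add] at this ⊢
    rw [← this, add_comm]
  have h2 : ∫ x in (0 : ℝ)..1, G (x + 1 / n) = ω * ∫ x in (0 : ℝ)..1, G x := by
    simp_rw [hshift]
    rw [intervalIntegral.integral_const_mul]
  have hω1 : ω ≠ 1 := by
    intro h
    rw [hω, Complex.exp_eq_one_iff] at h
    obtain ⟨m, hm⟩ := h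
    apply hk
    refine ⟨-m, ?_⟩
    have hpi : (Real.pi : ℂ) ≠ 0 := by exact_mod_cast Real.pi_ne_zero
    have h3 : (k : ℂ) = n * (-m : ℂ) := by
      field_simp at hm
      linear_combination -hm
    exact_mod_cast h3
  have h3 : (ω - 1) * ∫ x in (0 : ℝ)..1, G x = 0 := by
    rw [sub_mul, ← h2, h1]; ring
  exact (mul_eq_zero.mp h3).resolve_left (sub_ne_zero.mpr hω1)

theorem fc_finset_sum {I : Finset ℕ} {g : ℕ → ℝ → ℝ} (a : ℕ → ℝ) (hg : ∀ n ∈ I, Measurable (g n))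
    {B : ℕ → ℝ} (hB : ∀ n ∈ I, ∀ x, |g n x| ≤ B n) (k : ℤ) :
    fc (fun t => ∑ n ∈ I, a n * g n t) k = ∑ n ∈ I, (a n : ℂ) * fc (g n) k := by
  unfold fc
  simp_rw [Complex.ofReal_sum, mul_sum]
  rw [intervalIntegral.integral_finsetSum]
  · refine sum_congr rfl fun n _ => ?_
    rw [← intervalIntegral.integral_const_mul]
    congr 1
    funext x
    push_cast
    ring
  · intro n hn
    refine ((intervalIntegrable_exp_mul (hg n hn) (hB n hn) k 0 1).const_mul (a n : ℂ)).congr ?_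
    intro x _
    push_cast
    ring

theorem sum_filter_dvd_le {h : ℕ → ℝ} (hh : ∀ k, 0 ≤ h k) {n : ℕ} (hn : 1 ≤ n) (J : ℕ) :
    ∑ k ∈ (Icc 1 J).filter (n ∣ ·), h k ≤ ∑ j ∈ Icc 1 J, h (n * j) := by
  have hinj : Set.InjOn (fun j => n * j) (Icc 1 J : Finset ℕ) := by
    intro a _ b _ hab
    exact Nat.eq_of_mul_eq_mul_left hn hab
  rw [← sum_image (f := h) hinj]
  refine sum_le_sum_of_subset_of_nonneg ?_ fun _ _ _ => hh _
  intro k hk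
  simp only [mem_filter, mem_Icc] at hk
  obtain ⟨⟨hk1, hkJ⟩, j, rfl⟩ := hk
  refine mem_image.mpr ⟨j, mem_Icc.mpr ⟨?_, ?_⟩, rfl⟩
  · exact Nat.pos_of_ne_zero fun h => by simp [h] at hk1
  · exact (Nat.le_mul_of_pos_left j hn).trans hkJ

theorem card_divisors_mul_le (m n : ℕ) :
    (m * n).divisors.card ≤ m.divisors.card * n.divisors.card := by
  rw [Nat.divisors_mul]
  exact card_mul_le

theorem sum_card_divisors_mul_le {h : ℕ → ℝ} (hh : ∀ k, 0 ≤ h k) (J : ℕ) :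
    ∑ j ∈ Icc 1 J, (j.divisors.card : ℝ) * h j ≤ ∑ a ∈ Icc 1 J, ∑ b ∈ Icc 1 J, h (a * b) := by
  have h1 : ∀ j ∈ Icc 1 J, (j.divisors.card : ℝ) * h j =
      ∑ a ∈ Icc 1 J, if a ∣ j then h j else 0 := by
    intro j hj
    rw [← sum_filter, sum_const, nsmul_eq_mul]
    congr 3
    ext a
    simp only [mem_Icc] at hj
    simp only [Nat.mem_divisors, mem_filter, mem_Icc]
    constructor
    · rintro ⟨hd, _⟩
      exact ⟨⟨Nat.pos_of_dvd_of_pos hd hj.1, (Nat.le_of_dvd hj.1 hd).trans hj.2⟩, hd⟩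
    · rintro ⟨_, hd⟩
      exact ⟨hd, by omega⟩
  rw [sum_congr rfl h1, sum_comm]
  refine sum_le_sum fun a ha => ?_
  rw [← sum_filter]
  exact sum_filter_dvd_le hh (mem_Icc.mp ha).1 J

theorem sum_inv_sq_le_two (J : ℕ) : ∑ b ∈ Icc 1 J, ((b : ℝ) ^ 2)⁻¹ ≤ 2 := by
  have h := sum_Ioo_inv_sq_le (α := ℝ) 0 (J + 1)
  have he : Ioo 0 (J + 1) = Icc 1 J := by
    ext b; simp only [mem_Ioo, mem_Icc]; omega
  rw [he] at h
  simpa using h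

theorem sum_min_sq_le_of_one_le {Y : ℝ} (hY : 1 ≤ Y) (J : ℕ) :
    ∑ b ∈ Icc 1 J, min 1 (Y / b) ^ 2 ≤ 4 * Y := by
  have key : ∀ J : ℕ, ∑ b ∈ Icc 1 J, min 1 (Y / b) ^ 2 ≤ 4 * Y - 4 * Y ^ 2 / (Y + J) := by
    intro J
    induction J with
    | zero =>
      simp only [Icc_eq_empty_of_lt zero_lt_one, sum_empty, Nat.cast_zero, add_zero]
      rw [pow_two, ← mul_assoc, mul_div_assoc, div_self (by linarith)]
      simp
    | succ J ih =>
      rw [sum_Icc_succ_top (by omega)]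
      have hm : min 1 (Y / ((J + 1 : ℕ) : ℝ)) ^ 2 ≤
          4 * Y ^ 2 / (Y + J) - 4 * Y ^ 2 / (Y + (J + 1 : ℕ)) := by
        push_cast
        have hJ : (0 : ℝ) ≤ J := Nat.cast_nonneg J
        set j := (J : ℝ) with hj
        have hle : min 1 (Y / (j + 1)) ≤ 2 * Y / (Y + (j + 1)) := by
          rcases le_total Y (j + 1) with h | h
          · refine (min_le_right _ _).trans ?_
            rw [div_le_div_iff₀ (by linarith) (by linarith)]
            nlinarith
          · refine (min_le_left _ _).trans ?_
            rw [le_div_iff₀ (by linarith)]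
            linarith
        have h0 : 0 ≤ min 1 (Y / (j + 1)) := le_min zero_le_one (by positivity)
        calc min 1 (Y / (j + 1)) ^ 2 ≤ (2 * Y / (Y + (j + 1))) ^ 2 := by gcongr
          _ ≤ 4 * Y ^ 2 / ((Y + j) * (Y + (j + 1))) := by
            rw [div_pow]
            have : (2 * Y) ^ 2 = 4 * Y ^ 2 := by ring
            rw [this]
            apply div_le_div_of_nonneg_left (by positivity) (by positivity)
            nlinarith
          _ = _ := by
            have : Y + j ≠ 0 := by positivity
            have : Y + (j + 1) ≠ 0 := by positivity
            field_simp
            ring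
      linarith
  have := key J
  have h0 : 0 ≤ 4 * Y ^ 2 / (Y + J) := by positivity
  linarith

theorem sum_min_sq_le_two_mul_sq {Y : ℝ} (hY : 0 ≤ Y) (J : ℕ) :
    ∑ b ∈ Icc 1 J, min 1 (Y / b) ^ 2 ≤ 2 * Y ^ 2 := by
  calc ∑ b ∈ Icc 1 J, min 1 (Y / b) ^ 2 ≤ ∑ b ∈ Icc 1 J, Y ^ 2 * ((b : ℝ) ^ 2)⁻¹ := by
        refine sum_le_sum fun b _ => ?_
        have h0 : 0 ≤ min 1 (Y / b) := le_min zero_le_one (by positivity)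
        calc min 1 (Y / b) ^ 2 ≤ (Y / b) ^ 2 := by gcongr; exact min_le_right _ _
          _ = _ := by rw [div_pow, div_eq_mul_inv]
    _ = Y ^ 2 * ∑ b ∈ Icc 1 J, ((b : ℝ) ^ 2)⁻¹ := by rw [mul_sum]
    _ ≤ _ := by nlinarith [sum_inv_sq_le_two J, sq_nonneg Y]

theorem sum_inv_le_one_add_log (m : ℕ) : ∑ a ∈ Icc 1 m, ((a : ℝ))⁻¹ ≤ 1 + Real.log m := by
  have h := harmonic_le_one_add_log m
  rw [harmonic_eq_sum_Icc] at h
  push_cast at h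
  exact h

theorem sum_card_divisors_mul_min_sq_le {X : ℝ} (hX : 1 ≤ X) (J : ℕ) :
    ∑ j ∈ Icc 1 J, (j.divisors.card : ℝ) * min 1 (X / j) ^ 2 ≤ 8 * X * (3 + Real.log X) := by
  set m := ⌈X⌉₊ with hm
  have hXm : X ≤ m := Nat.le_ceil X
  have hm2 : (m : ℝ) ≤ 2 * X := by
    have := (Nat.ceil_lt_add_one (by linarith : 0 ≤ X)).le
    linarith
  have hm1 : (1 : ℝ) ≤ m := hX.trans hXm
  have hmn : 1 ≤ m := by exact_mod_cast hm1
  have hlog : Real.log m ≤ 1 + Real.log X := by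
    calc Real.log m ≤ Real.log (2 * X) := Real.log_le_log (by linarith) hm2
      _ = Real.log 2 + Real.log X := Real.log_mul (by norm_num) (by linarith)
      _ ≤ _ := by linarith [Real.log_two_lt_d9]
  have hlog0 : 0 ≤ Real.log m := Real.log_nonneg hm1
  have h1 : ∑ j ∈ Icc 1 J, (j.divisors.card : ℝ) * min 1 (X / j) ^ 2 ≤
      ∑ a ∈ Icc 1 J, ∑ b ∈ Icc 1 J, min 1 (X / (a * b : ℕ)) ^ 2 :=
    sum_card_divisors_mul_le (h := fun j => min 1 (X / j) ^ 2) (fun _ => sq_nonneg _) J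
  have h2 : ∀ a ∈ Icc 1 J, ∑ b ∈ Icc 1 J, min 1 (X / (a * b : ℕ)) ^ 2 ≤
      (if a ≤ m then 4 * (m : ℝ) * (a : ℝ)⁻¹ else 0) +
        (if m < a then 2 * (m : ℝ) ^ 2 * ((a : ℝ) ^ 2)⁻¹ else 0) := by
    intro a ha
    have ha1 : (1 : ℝ) ≤ a := by exact_mod_cast (mem_Icc.mp ha).1
    have ha0 : (0 : ℝ) < a := by linarith
    have h3 : ∑ b ∈ Icc 1 J, min 1 (X / (a * b : ℕ)) ^ 2 ≤
        ∑ b ∈ Icc 1 J, min 1 (((m : ℝ) / a) / b) ^ 2 := by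
      refine sum_le_sum fun b hb => ?_
      have h0 : 0 ≤ min 1 (X / (a * b : ℕ)) := le_min zero_le_one (by positivity)
      rw [div_div]
      push_cast at h0 ⊢
      gcongr
    refine h3.trans ?_
    rcases le_or_gt a m with h | h
    · have h' : (a : ℝ) ≤ m := by exact_mod_cast h
      rw [if_pos h, if_neg (by omega), add_zero]
      refine (sum_min_sq_le_of_one_le ?_ J).trans (le_of_eq ?_)
      · rwa [one_le_div ha0]
      · field_simp
    · rw [if_neg (by omega), if_pos h, zero_add]
      refine (sum_min_sq_le_two_mul_sq (by positivity) J).trans (le_of_eq ?_)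
      field_simp
  have h4 : ∑ a ∈ Icc 1 J, (if a ≤ m then 4 * (m : ℝ) * (a : ℝ)⁻¹ else 0) ≤
      4 * m * (1 + Real.log m) := by
    rw [← sum_filter, ← mul_sum]
    gcongr
    refine le_trans ?_ (sum_inv_le_one_add_log m)
    refine sum_le_sum_of_subset_of_nonneg ?_ fun _ _ _ => by positivity
    intro a ha
    simp only [mem_filter, mem_Icc] at ha ⊢
    exact ⟨ha.1.1, ha.2⟩
  have h5 : ∑ a ∈ Icc 1 J, (if m < a then 2 * (m : ℝ) ^ 2 * ((a : ℝ) ^ 2)⁻¹ else 0) ≤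
      4 * (m : ℝ) := by
    rw [← sum_filter, ← mul_sum]
    have h6 : ∑ a ∈ (Icc 1 J).filter (m < ·), ((a : ℝ) ^ 2)⁻¹ ≤ 2 / (m + 1) := by
      refine le_trans ?_ (sum_Ioo_inv_sq_le (α := ℝ) m (J + 1))
      refine sum_le_sum_of_subset_of_nonneg ?_ fun _ _ _ => by positivity
      intro a ha
      simp only [mem_filter, mem_Icc, mem_Ioo] at ha ⊢
      omega
    refine (mul_le_mul_of_nonneg_left h6 (by positivity)).trans ?_
    rw [← mul_div_assoc, div_le_iff₀ (by positivity)]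
    nlinarith
  calc _ ≤ _ := h1
    _ ≤ _ := sum_le_sum h2
    _ ≤ 4 * m * (1 + Real.log m) + 4 * m := by rw [sum_add_distrib]; exact add_le_add h4 h5
    _ = 4 * m * (2 + Real.log m) := by ring
    _ ≤ 4 * (2 * X) * (2 + (1 + Real.log X)) := by gcongr
    _ = _ := by ring

theorem sum_card_divisors_mul_min_dvd_le {X : ℝ} (hX : 1 ≤ X) {n : ℕ} (hn : 1 ≤ n) (J : ℕ) :
    ∑ k ∈ (Icc 1 J).filter (n ∣ ·), (k.divisors.card : ℝ) * min 1 (X * n / k) ^ 2 ≤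
      n.divisors.card * (8 * X * (3 + Real.log X)) := by
  have hn0 : (n : ℝ) ≠ 0 := by positivity
  calc _ ≤ ∑ j ∈ Icc 1 J, (((n * j).divisors.card : ℝ) * min 1 (X * n / (n * j : ℕ)) ^ 2) :=
        sum_filter_dvd_le (h := fun k => (k.divisors.card : ℝ) * min 1 (X * n / k) ^ 2)
          (fun k => by positivity) hn J
    _ ≤ ∑ j ∈ Icc 1 J, (n.divisors.card : ℝ) * ((j.divisors.card : ℝ) * min 1 (X / j) ^ 2) := by
        refine sum_le_sum fun j hj => ?_
        have h1 : X * n / (n * j : ℕ) = X / j := by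
          push_cast
          rw [mul_comm X, mul_div_mul_left _ _ hn0]
        rw [h1, ← mul_assoc]
        gcongr
        exact_mod_cast card_divisors_mul_le n j
    _ = n.divisors.card * ∑ j ∈ Icc 1 J, ((j.divisors.card : ℝ) * min 1 (X / j) ^ 2) := by
        rw [mul_sum]
    _ ≤ _ := by
        gcongr
        exact sum_card_divisors_mul_min_sq_le hX J

/-- Mean square bound for `∑ aₙ fₙ(n t)` with mean-zero `fₙ` whose Fourier coefficients decay
like `min (1, Xₙ / |k|)`. -/
theorem integral_sq_dilates_le {I : Finset ℕ} {f : ℕ → ℝ → ℝ} {a X B : ℕ → ℝ} {A : ℝ}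
    (hI : ∀ n ∈ I, 1 ≤ n) (hf : ∀ n ∈ I, Measurable (f n)) (hB : ∀ n ∈ I, ∀ x, |f n x| ≤ B n)
    (hp : ∀ n ∈ I, Function.Periodic (f n) 1) (h0 : ∀ n ∈ I, fc (f n) 0 = 0)
    (hX : ∀ n ∈ I, 1 ≤ X n)
    (hk : ∀ n ∈ I, ∀ k : ℤ, k ≠ 0 → ‖fc (f n) k‖ ≤ A * min 1 (X n / k.natAbs)) :
    ∫ t in (0 : ℝ)..1, (∑ n ∈ I, a n * f n (n * t)) ^ 2 ≤
      ∑ n ∈ I, 16 * A ^ 2 * (a n ^ 2 * n.divisors.card * X n * (3 + Real.log (X n))) := by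
  have hg : ∀ n ∈ I, Measurable (fun t : ℝ => f n (n * t)) := fun n hn =>
    (hf n hn).comp (measurable_const_mul _)
  have hgB : ∀ n ∈ I, ∀ x : ℝ, |f n (n * x)| ≤ B n := fun n hn x => hB n hn _
  have hT : Measurable (fun t : ℝ => ∑ n ∈ I, a n * f n (n * t)) :=
    Finset.measurable_sum _ fun n hn => (hg n hn).const_mul _
  have hTB : ∀ t : ℝ, |∑ n ∈ I, a n * f n (n * t)| ≤ ∑ n ∈ I, |a n| * B n := fun t => by
    refine (abs_sum_le_sum_abs _ _).trans (sum_le_sum fun n hn => ?_)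
    rw [abs_mul]
    exact mul_le_mul_of_nonneg_left (hgB n hn t) (abs_nonneg _)
  set G : ℕ → ℝ := fun k => ∑ n ∈ I, if n ∣ k then
    (k.divisors.card : ℝ) * (A ^ 2 * a n ^ 2 * min 1 (X n * n / k) ^ 2) else 0 with hG
  have hGnn : ∀ k, 0 ≤ G k := fun k => sum_nonneg fun n _ => by split_ifs <;> positivity
  have hcoef : ∀ k : ℤ, k ≠ 0 →
      ‖fc (fun t => ∑ n ∈ I, a n * f n (n * t)) k‖ ^ 2 ≤ G k.natAbs := by
    intro k hk0
    have hk0' : k.natAbs ≠ 0 := by omega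
    rw [fc_finset_sum a hg hgB]
    have h1 : ∀ n ∈ I, ‖(a n : ℂ) * fc (fun t => f n (n * t)) k‖ ≤
        if n ∣ k.natAbs then |A| * |a n| * min 1 (X n * n / k.natAbs) else 0 := by
      intro n hn
      have hn1 := hI n hn
      have hnr : (0 : ℝ) < n := by exact_mod_cast hn1
      split_ifs with hd
      · obtain ⟨l, rfl⟩ := Int.natCast_dvd.mpr hd
        rw [fc_dilate_of_dvd (hf n hn) (hB n hn) (hp n hn) hn1, norm_mul, Complex.norm_real,
          Real.norm_eq_abs]
        have hl : l ≠ 0 := fun h => hk0 (by simp [h])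
        have h2 := hk n hn l hl
        have h3 : X n * n / ((n * l : ℤ).natAbs : ℝ) = X n / l.natAbs := by
          rw [Int.natAbs_mul, Int.natAbs_natCast, Nat.cast_mul, mul_comm (X n),
            mul_div_mul_left _ _ hnr.ne']
        rw [h3]
        have h4 : 0 ≤ min 1 (X n / l.natAbs) :=
          le_min zero_le_one (div_nonneg (by linarith [hX n hn]) (Nat.cast_nonneg _))
        calc |a n| * ‖fc (f n) l‖ ≤ |a n| * (|A| * min 1 (X n / l.natAbs)) := by
              gcongr
              exact h2.trans (mul_le_mul_of_nonneg_right (le_abs_self A) h4)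
          _ = _ := by ring
      · rw [fc_dilate_of_not_dvd (hp n hn) hn1 (fun h => hd (Int.natCast_dvd.mp h))]
        simp
    have h5 : ‖∑ n ∈ I, (a n : ℂ) * fc (fun t => f n (n * t)) k‖ ≤
        ∑ n ∈ I.filter (· ∣ k.natAbs), |A| * |a n| * min 1 (X n * n / k.natAbs) := by
      rw [sum_filter]
      exact (norm_sum_le _ _).trans (sum_le_sum h1)
    calc _ ≤ (∑ n ∈ I.filter (· ∣ k.natAbs), |A| * |a n| * min 1 (X n * n / k.natAbs)) ^ 2 := by
          gcongr
      _ ≤ (#(I.filter (· ∣ k.natAbs)) : ℝ) *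
          ∑ n ∈ I.filter (· ∣ k.natAbs), (|A| * |a n| * min 1 (X n * n / k.natAbs)) ^ 2 :=
          sq_sum_le_card_mul_sum_sq
      _ ≤ (k.natAbs.divisors.card : ℝ) *
          ∑ n ∈ I.filter (· ∣ k.natAbs), (|A| * |a n| * min 1 (X n * n / k.natAbs)) ^ 2 := by
          gcongr
          intro n hn
          exact Nat.mem_divisors.mpr ⟨(mem_filter.mp hn).2, hk0'⟩
      _ = G k.natAbs := by
          rw [hG, mul_sum, sum_filter]
          refine sum_congr rfl fun n _ => ?_
          split_ifs
          · rw [mul_pow, mul_pow, sq_abs, sq_abs]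
          · rfl
  have hzero : fc (fun t => ∑ n ∈ I, a n * f n (n * t)) 0 = 0 := by
    rw [fc_finset_sum a hg hgB]
    refine sum_eq_zero fun n hn => ?_
    have := fc_dilate_of_dvd (hf n hn) (hB n hn) (hp n hn) (hI n hn) 0
    rw [mul_zero, h0 n hn] at this
    rw [this, mul_zero]
  have hGsum : ∀ J : ℕ, ∑ k ∈ Icc 1 J, G k ≤
      ∑ n ∈ I, 8 * A ^ 2 * (a n ^ 2 * n.divisors.card * X n * (3 + Real.log (X n))) := by
    intro J
    rw [hG, sum_comm]
    refine sum_le_sum fun n hn => ?_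
    rw [← sum_filter]
    calc _ = A ^ 2 * a n ^ 2 * ∑ k ∈ (Icc 1 J).filter (n ∣ ·),
          (k.divisors.card : ℝ) * min 1 (X n * n / k) ^ 2 := by
          rw [mul_sum]
          exact sum_congr rfl fun k _ => by ring
      _ ≤ A ^ 2 * a n ^ 2 * (n.divisors.card * (8 * X n * (3 + Real.log (X n)))) := by
          gcongr
          exact sum_card_divisors_mul_min_dvd_le (hX n hn) (hI n hn) J
      _ = _ := by ring
  refine hasSum_le_of_sum_le (hasSum_sq_fc hT hTB) fun S => ?_
  set J := S.sup Int.natAbs with hJ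
  have hS : S ⊆ insert 0 ((Icc 1 J).image (fun k : ℕ => (k : ℤ)) ∪
      (Icc 1 J).image (fun k : ℕ => -(k : ℤ))) := by
    intro k hkS
    have hkJ : k.natAbs ≤ J := le_sup (f := Int.natAbs) hkS
    simp only [mem_insert, mem_union, mem_image, mem_Icc]
    rcases lt_trichotomy k 0 with h | h | h
    · exact Or.inr (Or.inr ⟨k.natAbs, by omega, by omega⟩)
    · exact Or.inl h
    · exact Or.inr (Or.inl ⟨k.natAbs, by omega, by omega⟩)
  set c := fun k : ℤ => ‖fc (fun t => ∑ n ∈ I, a n * f n (n * t)) k‖ ^ 2 with hc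
  have hcnn : ∀ k, 0 ≤ c k := fun k => sq_nonneg _
  have hpos : ∑ k ∈ (Icc 1 J).image (fun k : ℕ => (k : ℤ)), c k ≤ ∑ k ∈ Icc 1 J, G k := by
    rw [sum_image (fun x _ y _ h => by exact_mod_cast h)]
    refine sum_le_sum fun k hkJ => ?_
    have := (mem_Icc.mp hkJ).1
    simpa using hcoef k (by omega)
  have hneg : ∑ k ∈ (Icc 1 J).image (fun k : ℕ => -(k : ℤ)), c k ≤ ∑ k ∈ Icc 1 J, G k := by
    rw [sum_image (fun x _ y _ h => by simpa using h)]
    refine sum_le_sum fun k hkJ => ?_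
    have := (mem_Icc.mp hkJ).1
    simpa using hcoef (-k) (by omega)
  calc ∑ k ∈ S, c k ≤ _ := sum_le_sum_of_subset_of_nonneg hS fun _ _ _ => hcnn _
    _ ≤ c 0 + ∑ k ∈ ((Icc 1 J).image (fun k : ℕ => (k : ℤ)) ∪
        (Icc 1 J).image (fun k : ℕ => -(k : ℤ))), c k := by
        rw [sum_insert (by simp)]
    _ ≤ c 0 + (∑ k ∈ (Icc 1 J).image (fun k : ℕ => (k : ℤ)), c k +
        ∑ k ∈ (Icc 1 J).image (fun k : ℕ => -(k : ℤ)), c k) := by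
        gcongr
        rw [← sum_union_inter]
        exact le_add_of_nonneg_right (sum_nonneg fun _ _ => hcnn _)
    _ ≤ 0 + (∑ k ∈ Icc 1 J, G k + ∑ k ∈ Icc 1 J, G k) := by
        gcongr
        simp [hc, hzero]
    _ ≤ _ := by
        have := hGsum J
        have h2 : ∑ n ∈ I, 16 * A ^ 2 * (a n ^ 2 * n.divisors.card * X n * (3 + Real.log (X n))) =
          2 * ∑ n ∈ I, 8 * A ^ 2 * (a n ^ 2 * n.divisors.card * X n * (3 + Real.log (X n))) := by
          rw [mul_sum]
          exact sum_congr rfl fun n _ => by ring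
        rw [h2]
        linarith

/-- The representative of `t` modulo one nearest to zero. -/
def fr (t : ℝ) : ℝ := t - round t

theorem abs_fr_le (t : ℝ) : |fr t| ≤ 1 / 2 := abs_sub_round t

theorem periodic_fr : Function.Periodic fr 1 := fun t => by
  unfold fr
  rw [round_add_one]
  push_cast
  ring

theorem measurable_fr : Measurable fr := by
  have h : fr = fun t : ℝ => t - ((⌊t + 1 / 2⌋ : ℤ) : ℝ) := by
    funext t; rw [fr, round_eq]
  rw [h]
  exact measurable_id.sub
    ((measurable_of_countable (fun z : ℤ => (z : ℝ))).comp
      (Int.measurable_floor.comp (measurable_id.add_const _)))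

theorem fr_eq_self {x : ℝ} (h : x ∈ Set.Ico (-(1 / 2) : ℝ) (1 / 2)) : fr x = x := by
  rw [fr, round_eq_zero_iff.mpr h]; simp

theorem fc_comp_fr {f : ℝ → ℝ} (hf : Measurable f) {B : ℝ} (hB : ∀ x, |f x| ≤ B) (k : ℤ) :
    fc (fun t => f (fr t)) k = ∫ x in (0 : ℝ)..(1 / 2),
      (Complex.exp (-(2 * Real.pi * Complex.I * k * x)) * f x +
        Complex.exp (2 * Real.pi * Complex.I * k * x) * f (-x)) := by
  have hper := periodic_exp_mul (f := fun t => f (fr t)) (fun x => by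
    simp only [periodic_fr x]) k
  have h1 := hper.intervalIntegral_add_eq 0 (-(1 / 2))
  rw [zero_add] at h1
  have h2 : (-(1 / 2) + 1 : ℝ) = 1 / 2 := by norm_num
  rw [h2] at h1
  have hii := fun a b => intervalIntegrable_exp_mul hf hB k a b
  have h3 : fc (fun t => f (fr t)) k = ∫ x in (-(1 / 2) : ℝ)..(1 / 2),
      Complex.exp (-(2 * Real.pi * Complex.I * k * x)) * f x := by
    rw [fc, h1]
    refine intervalIntegral.integral_congr_Ioo_of_le (by norm_num) fun x hx => ?_
    simp only [fr_eq_self (Set.Ioo_subset_Ico_self hx)]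
  rw [h3, ← intervalIntegral.integral_add_adjacent_intervals (hii _ 0) (hii 0 _)]
  have h4 : ∫ x in (-(1 / 2) : ℝ)..0, Complex.exp (-(2 * Real.pi * Complex.I * k * x)) * f x =
      ∫ x in (0 : ℝ)..(1 / 2), Complex.exp (2 * Real.pi * Complex.I * k * x) * f (-x) := by
    have := intervalIntegral.integral_comp_neg (a := 0) (b := 1 / 2)
      (fun x : ℝ => Complex.exp (-(2 * Real.pi * Complex.I * k * x)) * (f x : ℂ))
    rw [neg_zero] at this
    rw [← this]
    congr 1
    funext x
    push_cast
    ring_nf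
  have h5 : IntervalIntegrable (fun x : ℝ => Complex.exp (2 * Real.pi * Complex.I * k * x) *
      (f (-x) : ℂ)) volume 0 (1 / 2) := by
    have := intervalIntegrable_exp_mul (hf.comp measurable_neg) (fun x => hB (-x)) (-k) 0 (1 / 2)
    refine this.congr fun x _ => ?_
    simp only [Function.comp]
    push_cast
    ring_nf
  rw [h4, add_comm, intervalIntegral.integral_add (hii _ _) h5]

theorem norm_fc_comp_fr_of_odd {f : ℝ → ℝ} (hf : Measurable f) {B : ℝ} (hB : ∀ x, |f x| ≤ B)
    (ho : ∀ x, f (-x) = -f x) (k : ℤ) :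
    ‖fc (fun t => f (fr t)) k‖ =
      2 * |∫ x in (0 : ℝ)..(1 / 2), Real.sin (2 * Real.pi * k * x) * f x| := by
  have h : fc (fun t => f (fr t)) k =
      (-2 * Complex.I) * ((∫ x in (0 : ℝ)..(1 / 2), Real.sin (2 * Real.pi * k * x) * f x : ℝ) : ℂ)
      := by
    rw [fc_comp_fr hf hB, ← intervalIntegral.integral_ofReal, ← intervalIntegral.integral_const_mul]
    congr 1
    funext x
    rw [ho]
    push_cast
    rw [Complex.sin]
    have e1 : 2 * Real.pi * Complex.I * k * x = (2 * Real.pi * k * x : ℂ) * Complex.I := by ring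
    rw [e1, ← neg_mul]
    linear_combination ((Complex.exp (-(2 * Real.pi * k * x : ℂ) * Complex.I) -
      Complex.exp ((2 * Real.pi * k * x : ℂ) * Complex.I)) * f x) * Complex.I_sq
  rw [h, norm_mul, Complex.norm_real]
  simp

theorem fc_comp_fr_of_even {f : ℝ → ℝ} (hf : Measurable f) {B : ℝ} (hB : ∀ x, |f x| ≤ B)
    (he : ∀ x, f (-x) = f x) (k : ℤ) :
    fc (fun t => f (fr t)) k =
      ((2 * ∫ x in (0 : ℝ)..(1 / 2), Real.cos (2 * Real.pi * k * x) * f x : ℝ) : ℂ) := by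
  rw [fc_comp_fr hf hB, Complex.ofReal_mul, ← intervalIntegral.integral_ofReal,
    ← intervalIntegral.integral_const_mul]
  congr 1
  funext x
  rw [he]
  push_cast
  rw [Complex.cos]
  have e1 : 2 * Real.pi * Complex.I * k * x = (2 * Real.pi * k * x : ℂ) * Complex.I := by ring
  rw [e1, ← neg_mul]
  ring

theorem abs_sr_le_one (t : ℝ) : |sr t| ≤ 1 := by
  rw [sr, abs_div]
  exact div_le_one_of_le₀ Real.abs_sin_le_abs (abs_nonneg _)

theorem abs_sr_sq_div_le (x : ℝ) : |sr x ^ 2 / x| ≤ |x|⁻¹ := by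
  rw [abs_div, abs_pow, div_eq_mul_inv]
  exact mul_le_of_le_one_left (by positivity) (pow_le_one₀ (abs_nonneg _) (abs_sr_le_one x))

theorem measurable_sr : Measurable sr := by
  unfold sr; fun_prop

theorem sr_neg (t : ℝ) : sr (-t) = sr t := by
  unfold sr
  rw [mul_neg, Real.sin_neg, neg_div_neg_eq]

theorem hasDerivAt_sr_sq_div {x : ℝ} (hx : 0 < x) :
    ∃ D : ℝ, HasDerivAt (fun x => sr x ^ 2 / x) D x ∧ |D| ≤ 5 / x ^ 2 ∧
      D = (4 * Real.pi * x * (Real.sin (2 * Real.pi * x) * Real.cos (2 * Real.pi * x)) -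
        3 * Real.sin (2 * Real.pi * x) ^ 2) / (4 * Real.pi ^ 2 * x ^ 4) := by
  have hpi := Real.pi_pos
  set S := Real.sin (2 * Real.pi * x) with hS
  set c := Real.cos (2 * Real.pi * x) with hc
  refine ⟨_, ?_, ?_, rfl⟩
  · have h1 : HasDerivAt (fun x => 2 * Real.pi * x) (2 * Real.pi) x := by
      simpa using (hasDerivAt_id x).const_mul (2 * Real.pi)
    have h2 := h1.sin
    have h3 := ((h2.div h1 (by positivity)).pow 2).div (hasDerivAt_id x) hx.ne'
    refine h3.congr_deriv ?_
    simp only [id, ← hS, ← hc, Pi.div_apply, Pi.pow_apply, Nat.cast_ofNat, Nat.add_one_sub_one, pow_one]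
    field_simp
    ring
  · have hS1 : |S| ≤ 2 * Real.pi * x := by
      have := Real.abs_sin_le_abs (x := 2 * Real.pi * x)
      rwa [abs_of_pos (by positivity : 0 < 2 * Real.pi * x)] at this
    have hc1 : |c| ≤ 1 := Real.abs_cos_le_one _
    rw [abs_div, abs_of_pos (by positivity : 0 < 4 * Real.pi ^ 2 * x ^ 4),
      div_le_div_iff₀ (by positivity) (by positivity)]
    have h4 : |4 * Real.pi * x * (S * c) - 3 * S ^ 2| ≤ 20 * Real.pi ^ 2 * x ^ 2 := by
      calc _ ≤ |4 * Real.pi * x * (S * c)| + |3 * S ^ 2| := abs_sub _ _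
        _ = 4 * Real.pi * x * (|S| * |c|) + 3 * |S| ^ 2 := by
          rw [abs_mul, abs_mul S, abs_of_pos (by positivity : 0 < 4 * Real.pi * x), abs_mul 3,
            abs_pow, abs_of_pos (by norm_num : (0 : ℝ) < 3)]
        _ ≤ 4 * Real.pi * x * ((2 * Real.pi * x) * 1) + 3 * (2 * Real.pi * x) ^ 2 := by gcongr
        _ = _ := by ring
    calc _ ≤ 20 * Real.pi ^ 2 * x ^ 2 * x ^ 2 := by gcongr
      _ = _ := by ring

theorem abs_integral_sin_mul_le {a : ℝ} (ha : 0 < a) (ha2 : a ≤ 1 / 2) {k : ℤ} (hk : k ≠ 0) :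
    |∫ x in a..(1 / 2), Real.sin (2 * Real.pi * k * x) * (sr x ^ 2 / x)| ≤
      2 / (k.natAbs * a) := by
  have hpi := Real.pi_gt_three
  have hkr : (k : ℝ) ≠ 0 := by exact_mod_cast hk
  have hkabs : (k.natAbs : ℝ) = |(k : ℝ)| := by rw [Nat.cast_natAbs]; simp
  have hkpos : 0 < |(k : ℝ)| := abs_pos.mpr hkr
  set w := 2 * Real.pi * k with hw
  have hw0 : w ≠ 0 := by positivity
  have hwabs : |w| = 2 * Real.pi * |(k : ℝ)| := by
    rw [hw, abs_mul, abs_of_pos (by positivity)]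
  set D := fun x : ℝ => (4 * Real.pi * x * (Real.sin (2 * Real.pi * x) *
    Real.cos (2 * Real.pi * x)) - 3 * Real.sin (2 * Real.pi * x) ^ 2) /
      (4 * Real.pi ^ 2 * x ^ 4) with hD
  have hpos : ∀ x ∈ Set.uIcc a (1 / 2), 0 < x := fun x hx => by
    rw [Set.uIcc_of_le ha2] at hx; exact ha.trans_le hx.1
  have hu : ∀ x ∈ Set.uIcc a (1 / 2), HasDerivAt (fun x => sr x ^ 2 / x) (D x) x := by
    intro x hx
    obtain ⟨E, h1, _, h3⟩ := hasDerivAt_sr_sq_div (hpos x hx)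
    rw [hD]; simp only; rw [← h3]; exact h1
  have hDb : ∀ x, 0 < x → |D x| ≤ 5 / x ^ 2 := by
    intro x hx
    obtain ⟨E, _, h2, h3⟩ := hasDerivAt_sr_sq_div hx
    rw [hD]; simp only; rw [← h3]; exact h2
  have hv : ∀ x ∈ Set.uIcc a (1 / 2),
      HasDerivAt (fun x => -Real.cos (w * x) / w) (Real.sin (w * x)) x := by
    intro x _
    have h1 : HasDerivAt (fun x => w * x) w x := by simpa using (hasDerivAt_id x).const_mul w
    have h2 := (h1.cos.neg).div_const w
    refine h2.congr_deriv ?_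
    field_simp
  have hDc : ContinuousOn D (Set.uIcc a (1 / 2)) := by
    refine ContinuousOn.div (by fun_prop) (by fun_prop) fun x hx => ?_
    have := hpos x hx
    positivity
  have hDi : IntervalIntegrable D volume a (1 / 2) := hDc.intervalIntegrable
  have hsi : IntervalIntegrable (fun x => Real.sin (w * x)) volume a (1 / 2) :=
    (by fun_prop : Continuous fun x => Real.sin (w * x)).intervalIntegrable _ _
  have hparts := intervalIntegral.integral_mul_deriv_eq_deriv_mul hu hv hDi hsi
  have hcomm : ∫ x in a..(1 / 2), Real.sin (w * x) * (sr x ^ 2 / x) =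
      ∫ x in a..(1 / 2), sr x ^ 2 / x * Real.sin (w * x) := by
    congr 1; funext x; ring
  rw [hcomm, hparts]
  have hvb : ∀ x, |-Real.cos (w * x) / w| ≤ |w|⁻¹ := by
    intro x
    rw [abs_div, abs_neg, div_eq_mul_inv]
    exact mul_le_of_le_one_left (by positivity) (Real.abs_cos_le_one _)
  have hInt : |∫ x in a..(1 / 2), D x * (-Real.cos (w * x) / w)| ≤ |w|⁻¹ * (5 / a) := by
    have hsq : IntervalIntegrable (fun x : ℝ => |w|⁻¹ * (5 / x ^ 2)) volume a (1 / 2) := by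
      refine ContinuousOn.intervalIntegrable ?_
      refine continuousOn_const.mul (continuousOn_const.div (by fun_prop) fun x hx => ?_)
      have := hpos x hx
      positivity
    have h1 := intervalIntegral.norm_integral_le_of_norm_le (f := fun x =>
      D x * (-Real.cos (w * x) / w)) (g := fun x => |w|⁻¹ * (5 / x ^ 2)) (μ := volume) ha2
      (Filter.Eventually.of_forall fun x hx => by
        rw [Real.norm_eq_abs, abs_mul, mul_comm]
        exact mul_le_mul (hvb x) (hDb x (ha.trans hx.1)) (abs_nonneg _) (by positivity)) hsq
    rw [Real.norm_eq_abs] at h1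
    refine h1.trans ?_
    rw [intervalIntegral.integral_const_mul]
    gcongr
    have h2 : ∫ x in a..(1 / 2), 5 / x ^ 2 = -5 / (1 / 2) - -5 / a := by
      refine intervalIntegral.integral_eq_sub_of_hasDerivAt (f := fun x : ℝ => -5 / x)
        (fun x hx => ?_) ?_
      · have hx0 := hpos x hx
        have := (hasDerivAt_const x (-5 : ℝ)).div (hasDerivAt_id x) hx0.ne'
        refine this.congr_deriv ?_
        simp
      · refine ContinuousOn.intervalIntegrable (continuousOn_const.div (by fun_prop) fun x hx => ?_)
        have := hpos x hx
        positivity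
    rw [h2, neg_div, neg_div]
    norm_num
  have hb1 : |sr (1 / 2) ^ 2 / (1 / 2) * (-Real.cos (w * (1 / 2)) / w)| ≤ a⁻¹ * |w|⁻¹ := by
    rw [abs_mul]
    refine mul_le_mul ?_ (hvb _) (abs_nonneg _) (by positivity)
    refine (abs_sr_sq_div_le _).trans ?_
    rw [abs_of_pos (by norm_num)]
    gcongr
  have hb2 : |sr a ^ 2 / a * (-Real.cos (w * a) / w)| ≤ a⁻¹ * |w|⁻¹ := by
    rw [abs_mul]
    refine mul_le_mul ?_ (hvb _) (abs_nonneg _) (by positivity)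
    refine (abs_sr_sq_div_le _).trans ?_
    rw [abs_of_pos ha]
  calc _ ≤ a⁻¹ * |w|⁻¹ + a⁻¹ * |w|⁻¹ + |w|⁻¹ * (5 / a) := by
        refine (abs_sub _ _).trans (add_le_add ((abs_sub _ _).trans (add_le_add hb1 hb2)) hInt)
    _ = 7 / (|w| * a) := by field_simp; norm_num
    _ ≤ 2 / (k.natAbs * a) := by
        rw [hkabs, hwabs, div_le_div_iff₀ (by positivity) (by positivity)]
        have : 0 < |(k : ℝ)| * a := by positivity
        nlinarith

theorem intervalIntegrable_sin_mul {a b : ℝ} (ha : 0 < a) (hb : 0 < b) (w : ℝ) :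
    IntervalIntegrable (fun x => Real.sin (w * x) * (sr x ^ 2 / x)) volume a b := by
  refine ContinuousOn.intervalIntegrable fun x hx => ?_
  have hx0 : 0 < x := (lt_min ha hb).trans_le hx.1
  obtain ⟨D, hD, _⟩ := hasDerivAt_sr_sq_div hx0
  exact (ContinuousAt.mul (by fun_prop) hD.continuousAt).continuousWithinAt

theorem abs_integral_sin_mul_le_of_le {a b : ℝ} (ha : 0 < a) (hab : a ≤ b) (k : ℤ) :
    |∫ x in a..b, Real.sin (2 * Real.pi * k * x) * (sr x ^ 2 / x)| ≤
      2 * Real.pi * k.natAbs * b := by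
  have hkabs : (k.natAbs : ℝ) = |(k : ℝ)| := by rw [Nat.cast_natAbs]; simp
  have h := intervalIntegral.norm_integral_le_of_norm_le_const (a := a) (b := b)
    (f := fun x => Real.sin (2 * Real.pi * k * x) * (sr x ^ 2 / x))
    (C := 2 * Real.pi * k.natAbs) (fun x hx => by
      rw [Set.uIoc_of_le hab] at hx
      have hx0 : 0 < x := ha.trans hx.1
      rw [Real.norm_eq_abs, abs_mul]
      calc _ ≤ |2 * Real.pi * k * x| * |x|⁻¹ :=
            mul_le_mul Real.abs_sin_le_abs (abs_sr_sq_div_le x) (abs_nonneg _) (abs_nonneg _)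
        _ = 2 * Real.pi * k.natAbs := by
            rw [abs_mul, abs_mul, abs_of_pos (by positivity : 0 < 2 * Real.pi), hkabs, mul_assoc,
              mul_inv_cancel₀ (abs_pos.mpr hx0.ne').ne', mul_one])
  rw [Real.norm_eq_abs, abs_of_nonneg (by linarith : 0 ≤ b - a)] at h
  refine h.trans ?_
  gcongr
  linarith

theorem abs_integral_sin_mul_le_min {X : ℝ} (hX : 2 < X) {k : ℤ} (hk : k ≠ 0) :
    |∫ x in X⁻¹..(1 / 2), Real.sin (2 * Real.pi * k * x) * (sr x ^ 2 / x)| ≤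
      9 * min 1 (X / k.natAbs) := by
  have hpi := Real.pi_lt_d2
  have hk1 : (1 : ℝ) ≤ k.natAbs := by
    have : 1 ≤ k.natAbs := by omega
    exact_mod_cast this
  set m := (k.natAbs : ℝ) with hm
  have hX0 : 0 < X⁻¹ := by positivity
  have hX2 : X⁻¹ ≤ 1 / 2 := by
    rw [one_div]; exact inv_anti₀ (by norm_num) hX.le
  rcases le_total X m with h | h
  · rw [min_eq_right ((div_le_one (by linarith)).mpr h)]
    refine (abs_integral_sin_mul_le hX0 hX2 hk).trans ?_
    rw [← hm]
    have e : 2 / (m * X⁻¹) = 2 * (X / m) := by field_simp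
    rw [e]
    have : 0 ≤ X / m := by positivity
    linarith
  · rw [min_eq_left ((one_le_div (by linarith)).mpr h), mul_one]
    rcases le_total m 2 with h2 | h2
    · refine (abs_integral_sin_mul_le_of_le hX0 hX2 k).trans ?_
      rw [← hm]
      nlinarith
    · have hm0 : 0 < m⁻¹ := by positivity
      have hm2 : m⁻¹ ≤ 1 / 2 := by rw [one_div]; exact inv_anti₀ (by norm_num) h2
      have hXm : X⁻¹ ≤ m⁻¹ := inv_anti₀ (by linarith) h
      rw [← intervalIntegral.integral_add_adjacent_intervals
        (intervalIntegrable_sin_mul hX0 hm0 _) (intervalIntegrable_sin_mul hm0 (by norm_num) _)]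
      have h3 := abs_integral_sin_mul_le_of_le hX0 hXm k
      have h4 := abs_integral_sin_mul_le hm0 hm2 hk
      rw [← hm, mul_inv_cancel_right₀ (by positivity)] at h3
      rw [← hm, mul_inv_cancel₀ (by positivity)] at h4
      refine (abs_add_le _ _).trans ?_
      linarith

/-- The kernel `sr(θ)²/θ` truncated at `|θ| > 1/X`. -/
def kern (X t : ℝ) : ℝ := if 1 < X * |fr t| then sr (fr t) ^ 2 / fr t else 0

/-- The window `1/X < |θ| ≤ κ/X`, with height `X`. -/
def win (X κ t : ℝ) : ℝ := if 1 < X * |fr t| ∧ X * |fr t| ≤ κ then X else 0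

theorem measurable_kern (X : ℝ) : Measurable (kern X) := by
  unfold kern
  refine Measurable.ite ?_ ?_ measurable_const
  · exact measurableSet_lt measurable_const
      ((measurable_fr.norm).const_mul X)
  · exact ((measurable_sr.comp measurable_fr).pow_const 2).div measurable_fr

theorem measurable_win (X κ : ℝ) : Measurable (win X κ) := by
  unfold win
  refine Measurable.ite ?_ measurable_const measurable_const
  have h : Measurable fun t => X * |fr t| := (measurable_fr.norm).const_mul X
  exact (measurableSet_lt measurable_const h).inter (measurableSet_le h measurable_const)

theorem abs_trunc_le {X : ℝ} (hX : 0 ≤ X) (x : ℝ) :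
    |if 1 < X * |x| then sr x ^ 2 / x else 0| ≤ X := by
  split_ifs with h
  · refine (abs_sr_sq_div_le x).trans ?_
    have hx : 0 < |x| := by
      by_contra hx
      have : |x| = 0 := le_antisymm (not_lt.mp hx) (abs_nonneg x)
      rw [this] at h; norm_num at h
    rw [inv_le_iff_one_le_mul₀ hx]
    linarith
  · simpa using hX

theorem abs_kern_le {X : ℝ} (hX : 0 ≤ X) (t : ℝ) : |kern X t| ≤ X := abs_trunc_le hX _

theorem win_nonneg {X : ℝ} (hX : 0 ≤ X) (κ t : ℝ) : 0 ≤ win X κ t := by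
  unfold win; split_ifs <;> simp [hX]

theorem win_le {X : ℝ} (hX : 0 ≤ X) (κ t : ℝ) : win X κ t ≤ X := by
  unfold win; split_ifs <;> simp [hX]

theorem periodic_kern (X : ℝ) : Function.Periodic (kern X) 1 := fun t => by
  simp only [kern, periodic_fr t]

theorem periodic_win (X κ : ℝ) : Function.Periodic (win X κ) 1 := fun t => by
  simp only [win, periodic_fr t]

theorem norm_fc_kern {X : ℝ} (hX : 2 < X) (k : ℤ) : ‖fc (kern X) k‖ =
    2 * |∫ x in X⁻¹..(1 / 2), Real.sin (2 * Real.pi * k * x) * (sr x ^ 2 / x)| := by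
  have hX0 : 0 < X := by linarith
  set f : ℝ → ℝ := fun x => if 1 < X * |x| then sr x ^ 2 / x else 0 with hf
  have hfm : Measurable f := by
    refine Measurable.ite ?_ ?_ measurable_const
    · exact measurableSet_lt measurable_const (measurable_id.norm.const_mul X)
    · exact (measurable_sr.pow_const 2).div measurable_id
  have ho : ∀ x, f (-x) = -f x := by
    intro x
    simp only [hf, abs_neg, sr_neg, div_neg]
    split_ifs <;> simp
  have h1 : kern X = fun t => f (fr t) := rfl
  rw [h1, norm_fc_comp_fr_of_odd hfm (abs_trunc_le hX0.le) ho]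
  have hX1 : 0 < X⁻¹ := by positivity
  have hX2 : X⁻¹ ≤ 1 / 2 := by rw [one_div]; exact inv_anti₀ (by norm_num) hX.le
  have hle : ∫ x in (0 : ℝ)..X⁻¹, Real.sin (2 * Real.pi * k * x) * f x = 0 := by
    rw [intervalIntegral.integral_congr_Ioo_of_le hX1.le (g := fun _ => (0 : ℝ)) fun x hx => ?_]
    · simp
    · have : ¬ 1 < X * |x| := by
        rw [abs_of_pos hx.1, not_lt]
        have := mul_le_mul_of_nonneg_left hx.2.le hX0.le
        rwa [mul_inv_cancel₀ hX0.ne'] at this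
      simp [hf, this]
  have hi : ∀ a b : ℝ, IntervalIntegrable (fun x => Real.sin (2 * Real.pi * k * x) * f x)
      volume a b := by
    intro a b
    rw [intervalIntegrable_iff]
    refine Measure.integrableOn_of_bounded (M := X) (by simp)
      ((by fun_prop : Measurable fun x => Real.sin (2 * Real.pi * k * x)).mul
        hfm).aestronglyMeasurable (Filter.Eventually.of_forall fun x => ?_)
    rw [Real.norm_eq_abs, abs_mul]
    exact (mul_le_of_le_one_left (abs_nonneg _) (Real.abs_sin_le_one _)).trans
      (abs_trunc_le hX0.le x)
  rw [← intervalIntegral.integral_add_adjacent_intervals (hi 0 X⁻¹) (hi X⁻¹ (1 / 2)), hle, zero_add]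
  congr 2
  refine intervalIntegral.integral_congr_Ioo_of_le hX2 fun x hx => ?_
  have : 1 < X * |x| := by
    rw [abs_of_pos (hX1.trans hx.1)]
    have := mul_lt_mul_of_pos_left hx.1 hX0
    rwa [mul_inv_cancel₀ hX0.ne'] at this
  simp [hf, this]

theorem fc_kern_zero {X : ℝ} (hX : 2 < X) : fc (kern X) 0 = 0 := by
  rw [← norm_eq_zero, norm_fc_kern hX]
  simp

theorem norm_fc_kern_le {X : ℝ} (hX : 2 < X) {k : ℤ} (hk : k ≠ 0) :
    ‖fc (kern X) k‖ ≤ 18 * min 1 (X / k.natAbs) := by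
  rw [norm_fc_kern hX]
  linarith [abs_integral_sin_mul_le_min hX hk]

theorem fc_win {X κ : ℝ} (hX : 2 < X) (hκ : 1 ≤ κ) (k : ℤ) : fc (win X κ) k =
    ((2 * X * ∫ x in X⁻¹..min (κ / X) (1 / 2), Real.cos (2 * Real.pi * k * x) : ℝ) : ℂ) := by
  have hX0 : 0 < X := by linarith
  set f : ℝ → ℝ := fun x => if 1 < X * |x| ∧ X * |x| ≤ κ then X else 0 with hf
  have hfm : Measurable f := by
    refine Measurable.ite ?_ measurable_const measurable_const
    have h : Measurable fun t : ℝ => X * |t| := measurable_id.norm.const_mul X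
    exact (measurableSet_lt measurable_const h).inter (measurableSet_le h measurable_const)
  have hfB : ∀ x, |f x| ≤ X := by
    intro x
    simp only [hf]
    split_ifs <;> simp [abs_of_pos hX0, hX0.le]
  have h1 : win X κ = fun t => f (fr t) := rfl
  rw [h1, fc_comp_fr_of_even hfm hfB (fun x => by simp [hf])]
  have hX1 : 0 < X⁻¹ := by positivity
  have hX2 : X⁻¹ ≤ 1 / 2 := by rw [one_div]; exact inv_anti₀ (by norm_num) hX.le
  set b := min (κ / X) (1 / 2) with hb
  have hXb : X⁻¹ ≤ b := le_min (by rw [← one_div]; gcongr) hX2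
  have hb2 : b ≤ 1 / 2 := min_le_right _ _
  have hi : ∀ a b : ℝ, IntervalIntegrable (fun x => Real.cos (2 * Real.pi * k * x) * f x)
      volume a b := by
    intro a b
    rw [intervalIntegrable_iff]
    refine Measure.integrableOn_of_bounded (M := X) (by simp)
      ((by fun_prop : Measurable fun x => Real.cos (2 * Real.pi * k * x)).mul
        hfm).aestronglyMeasurable (Filter.Eventually.of_forall fun x => ?_)
    rw [Real.norm_eq_abs, abs_mul]
    exact (mul_le_of_le_one_left (abs_nonneg _) (Real.abs_cos_le_one _)).trans (hfB x)
  have hle : ∫ x in (0 : ℝ)..X⁻¹, Real.cos (2 * Real.pi * k * x) * f x = 0 := by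
    rw [intervalIntegral.integral_congr_Ioo_of_le hX1.le (g := fun _ => (0 : ℝ)) fun x hx => ?_]
    · simp
    · have : ¬ 1 < X * |x| := by
        rw [abs_of_pos hx.1, not_lt]
        have := mul_le_mul_of_nonneg_left hx.2.le hX0.le
        rwa [mul_inv_cancel₀ hX0.ne'] at this
      simp [hf, this]
  have hge : ∫ x in b..(1 / 2 : ℝ), Real.cos (2 * Real.pi * k * x) * f x = 0 := by
    rw [intervalIntegral.integral_congr_Ioo_of_le hb2 (g := fun _ => (0 : ℝ)) fun x hx => ?_]
    · simp
    · have hκx : κ / X < x := by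
        rcases min_lt_iff.mp hx.1 with h | h
        · exact h
        · exact absurd h (not_lt.mpr hx.2.le)
      have : ¬ X * |x| ≤ κ := by
        rw [abs_of_pos ((hX1.trans_le hXb).trans hx.1), not_le]
        rw [div_lt_iff₀ hX0] at hκx
        linarith
      simp [hf, this]
  have hmid : ∫ x in X⁻¹..b, Real.cos (2 * Real.pi * k * x) * f x =
      ∫ x in X⁻¹..b, Real.cos (2 * Real.pi * k * x) * X := by
    refine intervalIntegral.integral_congr_Ioo_of_le hXb fun x hx => ?_
    have h2 : 1 < X * |x| := by
      rw [abs_of_pos (hX1.trans hx.1)]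
      have := mul_lt_mul_of_pos_left hx.1 hX0
      rwa [mul_inv_cancel₀ hX0.ne'] at this
    have h3 : X * |x| ≤ κ := by
      rw [abs_of_pos (hX1.trans hx.1)]
      have h4 := hx.2.le.trans (min_le_left _ _)
      rw [le_div_iff₀ hX0] at h4
      linarith
    simp [hf, h2, h3]
  rw [← intervalIntegral.integral_add_adjacent_intervals (hi 0 X⁻¹) (hi X⁻¹ (1 / 2)),
    ← intervalIntegral.integral_add_adjacent_intervals (hi X⁻¹ b) (hi b (1 / 2)), hle, hge, hmid,
    zero_add, add_zero, intervalIntegral.integral_mul_const]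
  congr 1
  ring

theorem norm_fc_win_le_two_mul {X κ : ℝ} (hX : 2 < X) (hκ : 1 ≤ κ) (k : ℤ) :
    ‖fc (win X κ) k‖ ≤ 2 * (κ - 1) := by
  have hX0 : 0 < X := by linarith
  have hX2 : X⁻¹ ≤ 1 / 2 := by rw [one_div]; exact inv_anti₀ (by norm_num) hX.le
  have hXb : X⁻¹ ≤ min (κ / X) (1 / 2) := le_min (by rw [← one_div]; gcongr) hX2
  rw [fc_win hX hκ, Complex.norm_real, Real.norm_eq_abs, abs_mul, abs_of_pos (by positivity)]
  have h := intervalIntegral.norm_integral_le_of_norm_le_const (a := X⁻¹) (b := min (κ / X) (1 / 2))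
    (f := fun x => Real.cos (2 * Real.pi * k * x)) (C := 1) (fun x _ => Real.abs_cos_le_one _)
  rw [Real.norm_eq_abs, abs_of_nonneg (sub_nonneg.mpr hXb), one_mul] at h
  calc _ ≤ 2 * X * (κ / X - X⁻¹) := by
        gcongr
        exact h.trans (sub_le_sub_right (min_le_left _ _) _)
    _ = _ := by field_simp

theorem norm_fc_win_le_div {X κ : ℝ} (hX : 2 < X) (hκ : 1 ≤ κ) {k : ℤ} (hk : k ≠ 0) :
    ‖fc (win X κ) k‖ ≤ X / k.natAbs := by
  have hX0 : 0 < X := by linarith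
  have hpi := Real.pi_gt_three
  have hkr : (k : ℝ) ≠ 0 := by exact_mod_cast hk
  have hkabs : (k.natAbs : ℝ) = |(k : ℝ)| := by rw [Nat.cast_natAbs]; simp
  have hkpos : 0 < |(k : ℝ)| := abs_pos.mpr hkr
  have hw : 2 * Real.pi * k ≠ 0 := by positivity
  rw [fc_win hX hκ, Complex.norm_real, Real.norm_eq_abs, abs_mul, abs_of_pos (by positivity),
    intervalIntegral.integral_comp_mul_left (fun x => Real.cos x) hw, integral_cos, smul_eq_mul,
    abs_mul, abs_inv, abs_mul, abs_of_pos (by positivity : 0 < 2 * Real.pi), hkabs]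
  have h2 : ∀ u v : ℝ, |Real.sin u - Real.sin v| ≤ 2 := fun u v => by
    refine (abs_sub _ _).trans ?_
    linarith [Real.abs_sin_le_one u, Real.abs_sin_le_one v]
  calc _ ≤ 2 * X * ((2 * Real.pi * |(k : ℝ)|)⁻¹ * 2) := by
        gcongr
        exact h2 _ _
    _ = (2 / Real.pi) * (X / |(k : ℝ)|) := by field_simp
    _ ≤ 1 * (X / |(k : ℝ)|) := by
        gcongr
        rw [div_le_one (by linarith)]
        linarith
    _ = _ := one_mul _

theorem add_sq_le_weighted (x y : ℝ) {c : ℝ} (hc : 0 < c) :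
    (x + y) ^ 2 ≤ (1 + c) * x ^ 2 + (1 + c⁻¹) * y ^ 2 := by
  have h : (1 + c) * x ^ 2 + (1 + c⁻¹) * y ^ 2 - (x + y) ^ 2 = (c * x - y) ^ 2 * c⁻¹ := by
    field_simp
    ring
  have : 0 ≤ (c * x - y) ^ 2 * c⁻¹ := by positivity
  linarith

/-- A Rademacher–Menshov maximal inequality for sums that are orthogonal up to a bound `v`. -/
theorem exists_maximal_bound {Ω : Type*} [MeasurableSpace Ω] {μ : Measure Ω} {Y : ℕ → Ω → ℝ}
    {v : ℕ → ℝ} (hY : ∀ a M, Integrable (fun t => (∑ i ∈ range M, Y (a + i) t) ^ 2) μ)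
    (hv : ∀ a M, ∫ t, (∑ i ∈ range M, Y (a + i) t) ^ 2 ∂μ ≤ ∑ i ∈ range M, v (a + i))
    (K a : ℕ) :
    ∃ Q : Ω → ℝ, Integrable Q μ ∧ (∀ t, 0 ≤ Q t) ∧
      (∀ M ≤ 2 ^ K, ∀ t, (∑ i ∈ range M, Y (a + i) t) ^ 2 ≤ Q t) ∧
      ∫ t, Q t ∂μ ≤ (K + 1) ^ 2 * ∑ i ∈ range (2 ^ K), v (a + i) := by
  induction K generalizing a with
  | zero =>
    refine ⟨fun t => (∑ i ∈ range 1, Y (a + i) t) ^ 2, hY a 1, fun t => sq_nonneg _, ?_, ?_⟩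
    · intro M hM t
      interval_cases M
      · simpa using sq_nonneg _
      · exact le_rfl
    · simpa using hv a 1
  | succ K ih =>
    obtain ⟨Q₁, hQ₁, hp₁, hm₁, hi₁⟩ := ih a
    obtain ⟨Q₂, hQ₂, hp₂, hm₂, hi₂⟩ := ih (a + 2 ^ K)
    set c : ℝ := ((K : ℝ) + 1)⁻¹ with hc
    have hc0 : 0 < c := by positivity
    have hsplit : ∀ (f : ℕ → ℝ) (M : ℕ), 2 ^ K ≤ M → ∑ i ∈ range M, f (a + i) =
        ∑ i ∈ range (2 ^ K), f (a + i) + ∑ i ∈ range (M - 2 ^ K), f (a + 2 ^ K + i) := by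
      intro f M hM
      obtain ⟨r, rfl⟩ := Nat.exists_eq_add_of_le hM
      rw [sum_range_add, Nat.add_sub_cancel_left]
      simp only [add_assoc]
    have hp2 : (2 : ℕ) ^ (K + 1) - 2 ^ K = 2 ^ K := by rw [pow_succ]; omega
    refine ⟨fun t => (1 + c) * (Q₁ t + Q₂ t) + (1 + c⁻¹) * (∑ i ∈ range (2 ^ K), Y (a + i) t) ^ 2,
      ((hQ₁.add hQ₂).const_mul _).add ((hY a _).const_mul _), fun t => ?_, ?_, ?_⟩
    · have := hp₁ t; have := hp₂ t; positivity
    · intro M hM t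
      have h1 := hp₁ t
      have h2 := hp₂ t
      rcases le_total M (2 ^ K) with h | h
      · have h3 := hm₁ M h t
        have h4 : 0 ≤ (1 + c⁻¹) * (∑ i ∈ range (2 ^ K), Y (a + i) t) ^ 2 := by positivity
        nlinarith [mul_nonneg hc0.le h1, mul_nonneg hc0.le h2]
      · rw [hsplit (fun i => Y i t) M h, add_comm]
        refine (add_sq_le_weighted _ _ hc0).trans ?_
        have h3 := hm₂ (M - 2 ^ K) (by omega) t
        have h4 : (∑ i ∈ range (M - 2 ^ K), Y (a + 2 ^ K + i) t) ^ 2 ≤ Q₁ t + Q₂ t := by linarith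
        exact add_le_add (mul_le_mul_of_nonneg_left h4 (by positivity)) le_rfl
    · have hQ : Integrable (fun t => Q₁ t + Q₂ t) μ := hQ₁.add hQ₂
      rw [integral_add (hQ.const_mul _) ((hY a _).const_mul _),
        integral_const_mul, integral_const_mul, integral_add hQ₁ hQ₂, hsplit v _ (by rw [pow_succ]; omega), hp2]
      set A := ∑ i ∈ range (2 ^ K), v (a + i)
      set B := ∑ i ∈ range (2 ^ K), v (a + 2 ^ K + i)
      have hA := hv a (2 ^ K)
      have hB0 : 0 ≤ B := (integral_nonneg fun t => sq_nonneg _).trans (hv (a + 2 ^ K) (2 ^ K))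
      have hcK : c * ((K : ℝ) + 1) = 1 := inv_mul_cancel₀ (by positivity)
      have hci : c⁻¹ = (K : ℝ) + 1 := inv_inv _
      calc _ ≤ (1 + c) * (((K : ℝ) + 1) ^ 2 * A + ((K : ℝ) + 1) ^ 2 * B) + (1 + c⁻¹) * A := by
            gcongr
        _ = ((K : ℝ) + 1 + 1) ^ 2 * A + ((K : ℝ) + 1) * (K + 2) * B := by
            rw [hci]
            linear_combination ((K : ℝ) + 1) * (A + B) * hcK
        _ ≤ _ := by
            push_cast
            nlinarith [mul_nonneg (Nat.cast_nonneg (α := ℝ) K) hB0]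

theorem sum_mul_antitone_abs_le {f y : ℕ → ℝ} {n : ℕ} {A : ℝ}
    (hf : ∀ i, i + 1 < n → f (i + 1) ≤ f i) (hf0 : ∀ i < n, 0 ≤ f i) (hf1 : ∀ i < n, f i ≤ 1)
    (hA : 0 ≤ A) (hy : ∀ M ≤ n, |∑ i ∈ range M, y i| ≤ A) :
    |∑ i ∈ range n, f i * y i| ≤ A := by
  rcases Nat.eq_zero_or_pos n with rfl | hn
  · simpa using hA
  have h := Finset.sum_range_by_parts f y n
  simp only [smul_eq_mul] at h
  rw [h]
  have h1 : |f (n - 1) * ∑ i ∈ range n, y i| ≤ f (n - 1) * A := by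
    rw [abs_mul, abs_of_nonneg (hf0 _ (by omega))]
    exact mul_le_mul_of_nonneg_left (hy n le_rfl) (hf0 _ (by omega))
  have h2 : |∑ i ∈ range (n - 1), (f (i + 1) - f i) * ∑ j ∈ range (i + 1), y j| ≤
      (f 0 - f (n - 1)) * A := by
    refine (abs_sum_le_sum_abs _ _).trans ?_
    have h3 : (f 0 - f (n - 1)) * A = ∑ i ∈ range (n - 1), (f i - f (i + 1)) * A := by
      rw [← sum_mul, Finset.sum_range_sub']
    rw [h3]
    refine sum_le_sum fun i hi => ?_
    rw [mem_range] at hi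
    rw [abs_mul, abs_sub_comm, abs_of_nonneg (sub_nonneg.mpr (hf i (by omega)))]
    exact mul_le_mul_of_nonneg_left (hy _ (by omega)) (sub_nonneg.mpr (hf i (by omega)))
  refine (abs_sub _ _).trans ((add_le_add h1 h2).trans ?_)
  nlinarith [hf1 0 hn]

theorem sr_nonneg {t : ℝ} (h0 : 0 ≤ t) (h1 : t ≤ 1 / 2) : 0 ≤ sr t := by
  have hpi := Real.pi_pos
  exact div_nonneg (Real.sin_nonneg_of_nonneg_of_le_pi (by positivity) (by nlinarith))
    (by positivity)

theorem sr_anti {x y : ℝ} (hx : 0 < x) (hxy : x ≤ y) (hy : y ≤ 1 / 2) : sr y ≤ sr x := by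
  have hpi := Real.pi_pos
  have hy0 : 0 < y := hx.trans_le hxy
  unfold sr
  have hm : 2 * Real.pi * y ∈ Set.Icc 0 Real.pi := ⟨by positivity, by nlinarith⟩
  have hw : 0 ≤ 1 - x / y := sub_nonneg.mpr ((div_le_one hy0).mpr hxy)
  have hc := strictConcaveOn_sin_Icc.concaveOn.2 ⟨le_rfl, hpi.le⟩ hm hw
    (by positivity : 0 ≤ x / y) (by ring)
  simp only [smul_eq_mul, Real.sin_zero, mul_zero, zero_add] at hc
  have e : x / y * (2 * Real.pi * y) = 2 * Real.pi * x := by field_simp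
  rw [e] at hc
  calc _ = (x / y * Real.sin (2 * Real.pi * y)) / (2 * Real.pi * x) := by field_simp
    _ ≤ _ := by gcongr

theorem sum_range_ite_eq_sum_filter (P : ℕ → Prop) [DecidablePred P] (g : ℕ → ℝ) (a M : ℕ) :
    ∑ i ∈ range M, (if P (a + i) then g (a + i) else 0) = ∑ n ∈ Ico a (a + M) with P n, g n := by
  rw [sum_filter, sum_Ico_eq_sum_range, Nat.add_sub_cancel_left]

theorem exists_maximal_bound_dilates {c p : ℕ → ℝ} {L A : ℝ} (K : ℕ) (hp0 : ∀ n, 0 ≤ p n)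
    (hp1 : ∀ n, p n ≤ 1) (hc : ∀ n, |c n| ≤ (n * p n)⁻¹) (hL : 1 ≤ L) {f : ℕ → ℝ → ℝ}
    {B : ℕ → ℝ} (hf : ∀ n, Measurable (f n)) (hB : ∀ n x, |f n x| ≤ B n)
    (hper : ∀ n, Function.Periodic (f n) 1) (h0 : ∀ n, 2 * L < n * p n → fc (f n) 0 = 0)
    (hk : ∀ n, 2 * L < n * p n → ∀ k : ℤ, k ≠ 0 →
      ‖fc (f n) k‖ ≤ A * min 1 (n * p n / L / k.natAbs)) :
    ∃ Q : ℝ → ℝ, Integrable Q (volume.restrict (Set.Ioc 0 1)) ∧ (∀ t, 0 ≤ Q t) ∧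
      (∀ M ≤ 2 ^ K, ∀ t : ℝ,
        (∑ n ∈ range M, if 2 * L < n * p n then c n * f n (n * t) else 0) ^ 2 ≤ Q t) ∧
      ∫ t in Set.Ioc 0 1, Q t ≤ 48 * A ^ 2 * (K + 1) ^ 3 / L *
        ∑ n ∈ range (2 ^ K) with 1 ≤ n * p n, n.divisors.card * (n * p n)⁻¹ := by
  have hL0 : 0 < L := by linarith
  set X : ℕ → ℝ := fun n => n * p n / L with hX
  have hX2 : ∀ n : ℕ, 2 * L < n * p n → 2 < X n := fun n hn => by
    simp only [hX]
    rwa [lt_div_iff₀ hL0]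
  set Y : ℕ → ℝ → ℝ := fun n t => if 2 * L < n * p n then c n * f n (n * t) else 0 with hYdef
  set v : ℕ → ℝ := fun n => if 2 * L < n * p n then
    16 * A ^ 2 * (c n ^ 2 * n.divisors.card * X n * (3 + Real.log (X n))) else 0 with hvdef
  have hYm : ∀ n, Measurable (Y n) := by
    intro n
    simp only [hYdef]
    split_ifs
    · exact ((hf n).comp (measurable_const_mul _)).const_mul _
    · exact measurable_const
  have hYB : ∀ n t, |Y n t| ≤ |c n| * B n := by
    intro n t
    have hB0 : 0 ≤ B n := (abs_nonneg _).trans (hB n 0)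
    simp only [hYdef]
    split_ifs
    · rw [abs_mul]; exact mul_le_mul_of_nonneg_left (hB n _) (abs_nonneg _)
    · simpa using mul_nonneg (abs_nonneg _) hB0
  have hYi : ∀ a M, Integrable (fun t => (∑ i ∈ range M, Y (a + i) t) ^ 2)
      (volume.restrict (Set.Ioc 0 1)) := by
    intro a M
    refine Measure.integrableOn_of_bounded
      (M := (∑ i ∈ range M, |c (a + i)| * B (a + i)) ^ 2) (by simp)
      ((Finset.measurable_sum _ fun i _ => hYm (a + i)).pow_const 2).aestronglyMeasurable
      (Filter.Eventually.of_forall fun t => ?_)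
    rw [Real.norm_eq_abs, abs_pow]
    gcongr
    exact (abs_sum_le_sum_abs _ _).trans (sum_le_sum fun i _ => hYB _ _)
  have hYv : ∀ a M, ∫ t in Set.Ioc 0 1, (∑ i ∈ range M, Y (a + i) t) ^ 2 ≤
      ∑ i ∈ range M, v (a + i) := by
    intro a M
    rw [← intervalIntegral.integral_of_le zero_le_one]
    simp only [hYdef, hvdef]
    rw [sum_range_ite_eq_sum_filter (fun n : ℕ => 2 * L < n * p n) (fun n : ℕ =>
      16 * A ^ 2 * (c n ^ 2 * n.divisors.card * X n * (3 + Real.log (X n)))) a M]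
    have e : ∀ t : ℝ, ∑ i ∈ range M, (if 2 * L < ((a + i : ℕ) : ℝ) * p (a + i) then
        c (a + i) * f (a + i) ((a + i : ℕ) * t) else 0) =
        ∑ n ∈ Ico a (a + M) with 2 * L < n * p n, c n * f n (n * t) := fun t =>
      sum_range_ite_eq_sum_filter (fun n : ℕ => 2 * L < n * p n) (fun n : ℕ => c n * f n (n * t)) a M
    simp only [e]
    refine integral_sq_dilates_le (B := B) (fun n hn => ?_) (fun n _ => hf n) (fun n _ => hB n)
      (fun n _ => hper n) (fun n hn => h0 n (mem_filter.mp hn).2)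
      (fun n hn => one_le_two.trans (hX2 n (mem_filter.mp hn).2).le)
      (fun n hn => hk n (mem_filter.mp hn).2)
    have h1 := (mem_filter.mp hn).2
    by_contra hn0
    obtain rfl : n = 0 := by omega
    simp only [Nat.cast_zero, zero_mul] at h1
    linarith
  obtain ⟨Q, hQ, hQ0, hQm, hQi⟩ := exists_maximal_bound hYi hYv K 0
  simp only [zero_add] at hQm hQi
  refine ⟨Q, hQ, hQ0, hQm, hQi.trans ?_⟩
  have hlog2 : Real.log 2 ≤ 1 := by linarith [Real.log_two_lt_d9]
  have hvb : ∀ n ∈ range (2 ^ K), v n ≤ if 1 ≤ (n : ℝ) * p n then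
      48 * A ^ 2 * (K + 1) / L * (n.divisors.card * (n * p n)⁻¹) else 0 := by
    intro n hn
    have hn' : n < 2 ^ K := mem_range.mp hn
    have hnp0 : 0 ≤ (n : ℝ) * p n := mul_nonneg (Nat.cast_nonneg _) (hp0 n)
    simp only [hvdef]
    by_cases h : 2 * L < (n : ℝ) * p n
    · have h1 : 1 ≤ (n : ℝ) * p n := by linarith
      rw [if_pos h, if_pos h1]
      have hXpos : 0 < X n := by linarith [hX2 n h]
      have hXn : X n ≤ 2 ^ K := by
        calc X n ≤ (n : ℝ) * p n := div_le_self hnp0 hL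
          _ ≤ n := mul_le_of_le_one_right (Nat.cast_nonneg _) (hp1 n)
          _ ≤ 2 ^ K := by exact_mod_cast hn'.le
      have hlog : Real.log (X n) ≤ K := by
        calc Real.log (X n) ≤ Real.log (2 ^ K) := Real.log_le_log hXpos hXn
          _ = K * Real.log 2 := Real.log_pow _ _
          _ ≤ K * 1 := by gcongr
          _ = K := mul_one _
      have hc2 : c n ^ 2 ≤ (n * p n)⁻¹ ^ 2 := by
        rw [← sq_abs]
        exact pow_le_pow_left₀ (abs_nonneg _) (hc n) 2
      calc _ ≤ 16 * A ^ 2 * ((n * p n)⁻¹ ^ 2 * n.divisors.card * X n * (3 * (K + 1))) := by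
            have hlog0 : 0 ≤ Real.log (X n) := Real.log_nonneg (by linarith [hX2 n h])
            gcongr
            have : (0 : ℝ) ≤ K := Nat.cast_nonneg _
            linarith
        _ = _ := by
            simp only [hX]
            generalize (n : ℝ) * p n = z at *
            have : z ≠ 0 := by linarith
            field_simp
            ring
    · rw [if_neg h]
      split_ifs <;> positivity
  calc _ ≤ ((K : ℝ) + 1) ^ 2 * ∑ n ∈ range (2 ^ K), (if 1 ≤ (n : ℝ) * p n then
      48 * A ^ 2 * (K + 1) / L * (n.divisors.card * (n * p n)⁻¹) else 0) := by
        gcongr with n hn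
        exact hvb n hn
    _ = _ := by
        rw [← sum_filter, ← mul_sum]
        ring

theorem ae_bddAbove_of_summable_integral {Ω : Type*} [MeasurableSpace Ω] {μ : Measure Ω}
    {Q : ℕ → Ω → ℝ} (hQ : ∀ j, Integrable (Q j) μ) (h0 : ∀ j t, 0 ≤ Q j t)
    (hs : Summable fun j => ∫ t, Q j t ∂μ) : ∀ᵐ t ∂μ, ∃ C : ℝ, 0 ≤ C ∧ ∀ j, Q j t ≤ C := by
  have h1 : ∫⁻ t, ∑' j, ENNReal.ofReal (Q j t) ∂μ ≠ ⊤ := by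
    rw [lintegral_tsum fun j => (hQ j).aemeasurable.ennreal_ofReal]
    simp_rw [← fun j => ofReal_integral_eq_lintegral_ofReal (hQ j)
      (Filter.Eventually.of_forall (h0 j))]
    exact hs.tsum_ofReal_ne_top
  have hm : AEMeasurable (fun t => ∑' j, ENNReal.ofReal (Q j t)) μ :=
    AEMeasurable.tsum fun j => (hQ j).aemeasurable.ennreal_ofReal
  filter_upwards [ae_lt_top' hm h1] with t ht
  refine ⟨(∑' j, ENNReal.ofReal (Q j t)).toReal, ENNReal.toReal_nonneg, fun j => ?_⟩
  rw [← ENNReal.ofReal_le_iff_le_toReal ht.ne]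
  exact ENNReal.le_tsum j

theorem fc_const_of_ne_zero (m : ℝ) {k : ℤ} (hk : k ≠ 0) : fc (fun _ => m) k = 0 := by
  have h : ¬ ((k.natAbs + 1 : ℕ) : ℤ) ∣ k := by
    intro h
    have := Int.natAbs_dvd_natAbs.mpr h
    rw [Int.natAbs_natCast] at this
    have := Nat.le_of_dvd (by omega) this
    omega
  exact fc_dilate_of_not_dvd (f := fun _ => m) (fun _ => rfl) (by omega) h

theorem fc_sub_const {f : ℝ → ℝ} (hf : Measurable f) {B : ℝ} (hB : ∀ x, |f x| ≤ B) (m : ℝ)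
    (k : ℤ) : fc (fun t => f t - m) k = fc f k - fc (fun _ => m) k := by
  unfold fc
  rw [← intervalIntegral.integral_sub (intervalIntegrable_exp_mul hf hB k 0 1)
    (intervalIntegrable_exp_mul (f := fun _ => m) measurable_const (fun _ => le_rfl) k 0 1)]
  congr 1
  funext x
  push_cast
  ring

/-- The mean of the window over a period. -/
def winMean (X κ : ℝ) : ℝ := (fc (win X κ) 0).re

theorem abs_win_le {X : ℝ} (hX : 0 ≤ X) (κ t : ℝ) : |win X κ t| ≤ X := by
  rw [abs_of_nonneg (win_nonneg hX κ t)]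
  exact win_le hX κ t

theorem abs_winMean_le {X κ : ℝ} (hX : 2 < X) (hκ : 1 ≤ κ) : |winMean X κ| ≤ 2 * (κ - 1) :=
  (Complex.abs_re_le_norm _).trans (norm_fc_win_le_two_mul hX hκ 0)

theorem fc_win_sub_mean_zero {X κ : ℝ} (hX : 2 < X) (hκ : 1 ≤ κ) :
    fc (fun t => win X κ t - winMean X κ) 0 = 0 := by
  rw [fc_sub_const (measurable_win X κ) (abs_win_le (by linarith) κ)]
  have h1 : fc (fun _ => winMean X κ) 0 = (winMean X κ : ℂ) := by
    simp [fc]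
  rw [h1, winMean, fc_win hX hκ, Complex.ofReal_re, sub_self]

theorem norm_fc_win_sub_mean_le {X κ E : ℝ} (hX : 2 < X) (hκ : 1 ≤ κ) (hE : 1 ≤ E)
    (hκE : κ - 1 ≤ E) {k : ℤ} (hk : k ≠ 0) :
    ‖fc (fun t => win X κ t - winMean X κ) k‖ ≤ 2 * E * min 1 (X / k.natAbs) := by
  rw [fc_sub_const (measurable_win X κ) (abs_win_le (by linarith) κ), fc_const_of_ne_zero _ hk,
    sub_zero, mul_min_of_nonneg _ _ (by linarith)]
  refine le_min ?_ ?_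
  · linarith [norm_fc_win_le_two_mul hX hκ k]
  · refine (norm_fc_win_le_div hX hκ hk).trans ?_
    exact le_mul_of_one_le_left (by positivity) (by linarith)

/-- Replacing the threshold by a nearby one costs at most a window. -/
theorem abs_kern_sub_trunc_le {c z L L' κ : ℝ} (t : ℝ) (hL : 0 < L) (hz : 0 ≤ z) (hLL : L ≤ L')
    (hκ : L' ≤ κ * L) :
    |(if 2 * L < z then c * kern (z / L) t else 0) -
      (if L' < z * |fr t| then c * (sr (fr t) ^ 2 / fr t) else 0)| ≤
      if 2 * L < z then |c| * win (z / L) κ t else 0 := by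
  have hX : 0 ≤ z / L := by positivity
  have hfr := abs_fr_le t
  have hw := win_nonneg hX κ t
  have e : z / L * |fr t| = z * |fr t| / L := by ring
  by_cases h1 : L' < z * |fr t|
  · have h2 : 2 * L < z := by nlinarith [abs_nonneg (fr t)]
    have h3 : 1 < z / L * |fr t| := by
      rw [e, one_lt_div hL]
      linarith
    rw [if_pos h1, if_pos h2, if_pos h2, kern, if_pos h3, sub_self, abs_zero]
    positivity
  · rw [if_neg h1, sub_zero]
    by_cases h2 : 2 * L < z
    · rw [if_pos h2, if_pos h2, abs_mul]
      refine mul_le_mul_of_nonneg_left ?_ (abs_nonneg _)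
      by_cases h3 : 1 < z / L * |fr t|
      · have h4 : z / L * |fr t| ≤ κ := by
          rw [e, div_le_iff₀ hL]
          linarith [not_lt.mp h1]
        have : win (z / L) κ t = z / L := if_pos ⟨h3, h4⟩
        rw [this]
        exact abs_kern_le hX t
      · rw [kern, if_neg h3, abs_zero]
        exact hw
    · simp [if_neg h2]

theorem one_add_pow_le (s : ℕ) {x : ℝ} (h0 : 0 ≤ x) (h1 : x ≤ 1) :
    (1 + x) ^ s ≤ 1 + (2 ^ s - 1) * x := by
  induction s with
  | zero => simp
  | succ s ih =>
    have h2 : (1 : ℝ) ≤ 2 ^ s := one_le_pow₀ (by norm_num)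
    rw [pow_succ, pow_succ]
    calc _ ≤ (1 + (2 ^ s - 1) * x) * (1 + x) := by gcongr
      _ ≤ _ := by nlinarith [mul_nonneg (sub_nonneg.mpr h2) (mul_nonneg h0 (sub_nonneg.mpr h1))]

/-- The `D`-th root of `j + 1`. -/
def netRoot (D j : ℕ) : ℝ := ((j + 1 : ℕ) : ℝ) ^ ((D : ℝ)⁻¹)

theorem netRoot_pow {D : ℕ} (hD : 1 ≤ D) (j : ℕ) : netRoot D j ^ D = ((j + 1 : ℕ) : ℝ) :=
  Real.rpow_inv_natCast_pow (Nat.cast_nonneg _) (by omega)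

theorem one_le_netRoot (D j : ℕ) : 1 ≤ netRoot D j :=
  Real.one_le_rpow (by push_cast; linarith [Nat.cast_nonneg (α := ℝ) j]) (by positivity)

theorem summable_inv_netRoot_pow {D : ℕ} (hD : 1 ≤ D) :
    Summable fun j => (netRoot D j ^ (D + 1))⁻¹ := by
  have hD0 : (0 : ℝ) < D := by exact_mod_cast hD
  have h : Summable fun j : ℕ => ((j : ℝ) ^ (1 + (D : ℝ)⁻¹))⁻¹ :=
    Real.summable_nat_rpow_inv.mpr (by simpa using hD0)
  refine ((summable_nat_add_iff 1).mpr h).congr fun j => ?_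
  have hj : (0 : ℝ) < ((j + 1 : ℕ) : ℝ) := by positivity
  rw [pow_succ, netRoot_pow hD, netRoot, Real.rpow_add hj, Real.rpow_one]

/-- Every `l > 1` is close to a point of the net. -/
theorem exists_netRoot_near {D : ℕ} (hD : 1 ≤ D) (s : ℕ) {l : ℝ} (hl : 1 < l) :
    ∃ j : ℕ, netRoot D j ≤ l ∧ l ≤ 2 * netRoot D j ∧
      l ^ s ≤ (1 + 2 ^ s / ((j + 1 : ℕ) : ℝ)) * netRoot D j ^ s := by
  have hlD : 1 ≤ l ^ D := one_le_pow₀ hl.le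
  have hfl : 1 ≤ ⌊l ^ D⌋₊ := Nat.le_floor (by simpa using hlD)
  obtain ⟨j, hj⟩ : ∃ j, ⌊l ^ D⌋₊ = j + 1 := ⟨⌊l ^ D⌋₊ - 1, by omega⟩
  have h1 : ((j + 1 : ℕ) : ℝ) ≤ l ^ D := hj ▸ Nat.floor_le (by positivity)
  have h2 : l ^ D < ((j + 1 : ℕ) : ℝ) + 1 := hj ▸ Nat.lt_floor_add_one _
  set R := netRoot D j with hR
  have hR1 : 1 ≤ R := one_le_netRoot D j
  have hRD : R ^ D = ((j + 1 : ℕ) : ℝ) := netRoot_pow hD j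
  have hJ : (1 : ℝ) ≤ ((j + 1 : ℕ) : ℝ) := by exact_mod_cast Nat.le_add_left 1 j
  set J : ℝ := ((j + 1 : ℕ) : ℝ)
  have hRl : R ≤ l := by
    by_contra h
    have := pow_lt_pow_left₀ (not_le.mp h) (by linarith) (by omega : D ≠ 0)
    linarith
  have hq1 : 1 ≤ l / R := (one_le_div (by linarith)).mpr hRl
  have hq2 : l / R ≤ 1 + 1 / J := by
    calc l / R ≤ (l / R) ^ D := le_self_pow₀ hq1 (by omega)
      _ = l ^ D / J := by rw [div_pow, hRD]
      _ ≤ (J + 1) / J := by gcongr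
      _ = _ := by field_simp
  have hJ1 : 1 / J ≤ 1 := (div_le_one (by linarith)).mpr hJ
  refine ⟨j, hRl, ?_, ?_⟩
  · have : l / R ≤ 2 := by linarith
    rwa [div_le_iff₀ (by linarith)] at this
  · have h3 : (l / R) ^ s ≤ 1 + 2 ^ s / J := by
      calc (l / R) ^ s ≤ (1 + 1 / J) ^ s := by gcongr
        _ ≤ 1 + (2 ^ s - 1) * (1 / J) := one_add_pow_le s (by positivity) hJ1
        _ ≤ 1 + 2 ^ s * (1 / J) := by gcongr; linarith
        _ = _ := by ring
    rwa [div_pow, div_le_iff₀ (by positivity)] at h3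

theorem sq_le_two_pow_ceil {N : ℕ} (hN : 1 ≤ N) {R : ℝ} (h : Real.log N ≤ 2 * R) :
    N ^ 2 ≤ 2 ^ ⌈8 * R⌉₊ := by
  have hN0 : (0 : ℝ) < N := by exact_mod_cast hN
  have hR : 0 ≤ R := by
    have := Real.log_natCast_nonneg N
    linarith
  have h2 := Real.log_two_gt_d9
  have hK : 8 * R ≤ ⌈8 * R⌉₊ := Nat.le_ceil _
  have : ((N : ℝ)) ^ 2 ≤ 2 ^ ⌈8 * R⌉₊ := by
    rw [← Real.log_le_log_iff (by positivity) (by positivity), Real.log_pow, Real.log_pow]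
    push_cast
    nlinarith
  exact_mod_cast this

theorem ceil_add_one_le {R : ℝ} (hR : 1 ≤ R) : (⌈8 * R⌉₊ : ℝ) + 1 ≤ 10 * R := by
  have := Nat.ceil_lt_add_one (by linarith : 0 ≤ 8 * R)
  linarith

theorem ae_maximal_le_net {D s : ℕ} (hD : 1 ≤ D) (hs : 2 * D + 3 ≤ s) {c p : ℕ → ℝ} {A H : ℝ}
    (hp0 : ∀ n, 0 ≤ p n) (hp1 : ∀ n, p n ≤ 1) (hc : ∀ n, |c n| ≤ (n * p n)⁻¹)
    (hH : ∀ K : ℕ, ∑ n ∈ range (2 ^ K) with 1 ≤ n * p n, n.divisors.card * (n * p n)⁻¹ ≤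
      H * (K + 1) ^ (D + 1))
    {f : ℕ → ℕ → ℝ → ℝ} {B : ℕ → ℕ → ℝ} (hf : ∀ j n, Measurable (f j n))
    (hB : ∀ j n x, |f j n x| ≤ B j n) (hper : ∀ j n, Function.Periodic (f j n) 1)
    (h0 : ∀ j n, 2 * netRoot D j ^ s < n * p n → fc (f j n) 0 = 0)
    (hk : ∀ j n, 2 * netRoot D j ^ s < n * p n → ∀ k : ℤ, k ≠ 0 →
      ‖fc (f j n) k‖ ≤ A * min 1 (n * p n / netRoot D j ^ s / k.natAbs)) :
    ∀ᵐ t ∂(volume.restrict (Set.Ioc (0 : ℝ) 1)), ∃ C : ℝ, 0 ≤ C ∧ ∀ j,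
      ∀ M ≤ 2 ^ ⌈8 * netRoot D j⌉₊,
      |∑ n ∈ range M, if 2 * netRoot D j ^ s < n * p n then c n * f j n (n * t) else 0| ≤
        C * netRoot D j := by
  have hR1 := fun j => one_le_netRoot D j
  have hR0 : ∀ j, 0 < netRoot D j := fun j => zero_lt_one.trans_le (hR1 j)
  choose Q hQ hQ0 hQm hQi using fun j => exists_maximal_bound_dilates (A := A)
    ⌈8 * netRoot D j⌉₊ hp0 hp1 hc (one_le_pow₀ (n := s) (hR1 j)) (hf j) (hB j) (hper j) (h0 j)
    (hk j)
  have hsum : Summable fun j => ∫ t in Set.Ioc 0 1, Q j t * ((netRoot D j) ^ 2)⁻¹ := by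
    refine Summable.of_nonneg_of_le
      (fun j => integral_nonneg fun t => mul_nonneg (hQ0 j t) (by positivity)) (fun j => ?_)
      ((summable_inv_netRoot_pow hD).mul_left (48 * A ^ 2 * 10 ^ (D + 4) * H))
    rw [integral_mul_const]
    set R := netRoot D j with hR
    have hRp := hR0 j
    have hK := ceil_add_one_le (hR1 j)
    rw [← hR] at hK hRp
    have hH0 : 0 ≤ H := by
      have h := hH 0
      simp only [Nat.cast_zero, zero_add, one_pow, mul_one] at h
      refine le_trans (sum_nonneg fun n _ => ?_) h
      have := hp0 n
      positivity
    have hRs : R ^ (2 * D + 3) ≤ R ^ s := pow_le_pow_right₀ (hR1 j) hs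
    calc (∫ t in Set.Ioc 0 1, Q j t) * (R ^ 2)⁻¹
        ≤ (48 * A ^ 2 * ((⌈8 * R⌉₊ : ℝ) + 1) ^ 3 / R ^ s *
          (H * ((⌈8 * R⌉₊ : ℝ) + 1) ^ (D + 1))) * (R ^ 2)⁻¹ := by
          gcongr
          exact (hQi j).trans (mul_le_mul_of_nonneg_left (hH _) (by positivity))
      _ ≤ (48 * A ^ 2 * (10 * R) ^ 3 / R ^ (2 * D + 3) *
          (H * (10 * R) ^ (D + 1))) * (R ^ 2)⁻¹ := by gcongr
      _ = _ := by
          field_simp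
          ring
  have := ae_bddAbove_of_summable_integral
    (Q := fun j t => Q j t * ((netRoot D j) ^ 2)⁻¹) (fun j => (hQ j).mul_const _)
    (fun j t => mul_nonneg (hQ0 j t) (by positivity)) hsum
  filter_upwards [this] with t ⟨C, hC0, hC⟩
  refine ⟨C + 1, by linarith, fun j M hM => ?_⟩
  have hRp := hR0 j
  refine abs_le_of_sq_le_sq ?_ (by positivity)
  refine (hQm j M hM t).trans ?_
  have h := hC j
  rw [← div_eq_mul_inv, div_le_iff₀ (by positivity)] at h
  refine h.trans ?_
  rw [mul_pow]
  gcongr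
  nlinarith

/-- The truncated resonant sum along one coordinate has partial sums of size `O(log N)`. -/
theorem ae_partial_sums_le {D s : ℕ} (hD : 1 ≤ D) (hs : 2 * D + 3 ≤ s) {c p : ℕ → ℝ} {H : ℝ}
    (hp0 : ∀ n, 0 ≤ p n) (hp1 : ∀ n, p n ≤ 1) (hc : ∀ n, |c n| ≤ (n * p n)⁻¹)
    (hH : ∀ K : ℕ, ∑ n ∈ range (2 ^ K) with 1 ≤ n * p n, n.divisors.card * (n * p n)⁻¹ ≤
      H * (K + 1) ^ (D + 1)) :
    ∀ᵐ t ∂(volume.restrict (Set.Ioc (0 : ℝ) 1)), ∃ C : ℝ, 0 ≤ C ∧ ∀ N : ℕ, 3 ≤ N →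
      ∀ M ≤ N ^ 2, |∑ n ∈ range M, if Real.log N ^ s < n * p n * |fr (n * t)| then
        c n * (sr (fr (n * t)) ^ 2 / fr (n * t)) else 0| ≤ C * Real.log N := by
  set L : ℕ → ℝ := fun j => netRoot D j ^ s with hL
  set κ : ℕ → ℝ := fun j => 1 + 2 ^ s / ((j + 1 : ℕ) : ℝ) with hκ
  have hL1 : ∀ j, 1 ≤ L j := fun j => one_le_pow₀ (one_le_netRoot D j)
  have hL0 : ∀ j, 0 < L j := fun j => zero_lt_one.trans_le (hL1 j)
  have hz0 : ∀ n : ℕ, 0 ≤ (n : ℝ) * p n := fun n => mul_nonneg (Nat.cast_nonneg _) (hp0 n)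
  have hX0 : ∀ j (n : ℕ), 0 ≤ n * p n / L j := fun j n => div_nonneg (hz0 n) (hL0 j).le
  have hX2 : ∀ j (n : ℕ), 2 * netRoot D j ^ s < n * p n → 2 < n * p n / L j := fun j n h => by
    rwa [lt_div_iff₀ (hL0 j)]
  have hJ : ∀ j : ℕ, (1 : ℝ) ≤ ((j + 1 : ℕ) : ℝ) := fun j => by
    exact_mod_cast Nat.le_add_left 1 j
  have hκ1 : ∀ j, 1 ≤ κ j := fun j => by
    simp only [hκ]
    have : 0 ≤ 2 ^ s / ((j + 1 : ℕ) : ℝ) := by positivity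
    linarith
  have hκE : ∀ j, κ j - 1 ≤ 2 ^ s := fun j => by
    simp only [hκ, add_sub_cancel_left]
    exact div_le_self (by positivity) (hJ j)
  have hE : (1 : ℝ) ≤ 2 ^ s := one_le_pow₀ (by norm_num)
  have hS := ae_maximal_le_net (A := 18) hD hs hp0 hp1 hc hH
    (f := fun j n => kern (n * p n / L j)) (fun j n => measurable_kern _)
    (fun j n => abs_kern_le (hX0 j n)) (fun j n => periodic_kern _)
    (fun j n h => fc_kern_zero (hX2 j n h))
    (fun j n h k hk => norm_fc_kern_le (hX2 j n h) hk)
  have hW := ae_maximal_le_net (A := 2 * 2 ^ s) (c := fun n => |c n|) hD hs hp0 hp1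
    (fun n => by rw [abs_abs]; exact hc n) hH
    (f := fun j n t => win (n * p n / L j) (κ j) t - winMean (n * p n / L j) (κ j))
    (fun j n => (measurable_win _ _).sub_const _)
    (fun j n x => (abs_sub _ _).trans (add_le_add_left (abs_win_le (hX0 j n) _ x) _))
    (fun j n x => by simp only [periodic_win _ _ x])
    (fun j n h => fc_win_sub_mean_zero (hX2 j n h) (hκ1 j))
    (fun j n h k hk => norm_fc_win_sub_mean_le (hX2 j n h) (hκ1 j) hE (hκE j) hk)
  filter_upwards [hS, hW] with t ⟨C₁, hC₁, h₁⟩ ⟨C₂, hC₂, h₂⟩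
  have hH0 : 0 ≤ H := by
    have h := hH 0
    simp only [Nat.cast_zero, zero_add, one_pow, mul_one] at h
    refine le_trans (sum_nonneg fun n _ => ?_) h
    have := hp0 n
    positivity
  refine ⟨C₁ + C₂ + 2 * 2 ^ s * H * 10 ^ (D + 1), by positivity, fun N hN M hM => ?_⟩
  have hlog : 1 < Real.log N := by
    rw [Real.lt_log_iff_exp_lt (by positivity)]
    have : (3 : ℝ) ≤ N := by exact_mod_cast hN
    linarith [Real.exp_one_lt_d9]
  obtain ⟨j, hj1, hj2, hj3⟩ := exists_netRoot_near hD s hlog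
  have hMK : M ≤ 2 ^ ⌈8 * netRoot D j⌉₊ := hM.trans (sq_le_two_pow_ceil (by omega) hj2)
  have hR1 := one_le_netRoot D j
  have hLN : L j ≤ Real.log N ^ s := pow_le_pow_left₀ (by linarith) hj1 s
  have hb₁ := h₁ j M hMK
  have hb₂ := h₂ j M hMK
  set R := netRoot D j with hR
  have hdiff : ∀ n ∈ range M,
      |(if 2 * R ^ s < n * p n then c n * kern (n * p n / L j) (n * t) else 0) -
        (if Real.log N ^ s < n * p n * |fr (n * t)| then
          c n * (sr (fr (n * t)) ^ 2 / fr (n * t)) else 0)| ≤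
        (if 2 * R ^ s < n * p n then
          |c n| * (win (n * p n / L j) (κ j) (n * t) - winMean (n * p n / L j) (κ j)) else 0) +
        (if 1 ≤ n * p n then 2 * (2 ^ s / ((j + 1 : ℕ) : ℝ)) * (n.divisors.card * (n * p n)⁻¹)
          else 0) := by
    intro n _
    refine (abs_kern_sub_trunc_le (n * t) (hL0 j) (hz0 n) hLN hj3).trans ?_
    have hz := hz0 n
    by_cases h : 2 * R ^ s < n * p n
    · have h1 : 1 ≤ n * p n := by linarith [hL1 j, (rfl : L j = R ^ s)]
      rw [if_pos h, if_pos h, if_pos h1, mul_sub]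
      have hn : n ≠ 0 := by
        rintro rfl
        simp only [Nat.cast_zero, zero_mul] at h1
        linarith
      have hτ : (1 : ℝ) ≤ n.divisors.card := by
        exact_mod_cast Finset.card_pos.mpr ⟨1, Nat.one_mem_divisors.mpr hn⟩
      have hm : |c n| * winMean (n * p n / L j) (κ j) ≤
          2 * (2 ^ s / ((j + 1 : ℕ) : ℝ)) * (n.divisors.card * (n * p n)⁻¹) := by
        calc _ ≤ (n * p n)⁻¹ * (2 * (κ j - 1)) :=
              mul_le_mul_of_nonneg (hc n)
                ((le_abs_self _).trans (abs_winMean_le (hX2 j n h) (hκ1 j))) (abs_nonneg _)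
                (by linarith [hκ1 j])
          _ = 2 * (2 ^ s / ((j + 1 : ℕ) : ℝ)) * (1 * (n * p n)⁻¹) := by
              simp only [hκ, add_sub_cancel_left]; ring
          _ ≤ _ := by gcongr
      linarith
    · rw [if_neg h, if_neg h, zero_add]
      split_ifs <;> positivity
  have hmean : ∑ n ∈ range M, (if 1 ≤ n * p n then
      2 * (2 ^ s / ((j + 1 : ℕ) : ℝ)) * (n.divisors.card * (n * p n)⁻¹) else 0) ≤
      2 * 2 ^ s * H * 10 ^ (D + 1) * R := by
    calc _ ≤ ∑ n ∈ range (2 ^ ⌈8 * R⌉₊), (if 1 ≤ n * p n then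
          2 * (2 ^ s / ((j + 1 : ℕ) : ℝ)) * (n.divisors.card * (n * p n)⁻¹) else 0) := by
          refine sum_le_sum_of_subset_of_nonneg (range_mono hMK) fun n _ _ => ?_
          have := hz0 n
          split_ifs <;> positivity
      _ ≤ 2 * (2 ^ s / ((j + 1 : ℕ) : ℝ)) * (H * (⌈8 * R⌉₊ + 1) ^ (D + 1)) := by
          rw [← sum_filter, ← mul_sum]
          exact mul_le_mul_of_nonneg_left (hH _) (by positivity)
      _ ≤ 2 * (2 ^ s / ((j + 1 : ℕ) : ℝ)) * (H * (10 * R) ^ (D + 1)) := by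
          gcongr
          exact ceil_add_one_le hR1
      _ = _ := by
          rw [← netRoot_pow hD j, ← hR]
          have : R ≠ 0 := by linarith
          field_simp
          ring
  have htotal := (abs_sum_le_sum_abs _ _).trans (sum_le_sum hdiff)
  rw [sum_sub_distrib, sum_add_distrib] at htotal
  have h3 := abs_sub_abs_le_abs_sub (∑ n ∈ range M, if Real.log N ^ s < n * p n * |fr (n * t)| then
    c n * (sr (fr (n * t)) ^ 2 / fr (n * t)) else 0)
    (∑ n ∈ range M, if 2 * R ^ s < n * p n then c n * kern (n * p n / L j) (n * t) else 0)
  rw [abs_sub_comm] at h3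
  have h4 := le_abs_self (∑ n ∈ range M, if 2 * R ^ s < n * p n then
    |c n| * (win (n * p n / L j) (κ j) (n * t) - winMean (n * p n / L j) (κ j)) else 0)
  calc _ ≤ (C₁ + C₂ + 2 * 2 ^ s * H * 10 ^ (D + 1)) * R := by linarith
    _ ≤ _ := by gcongr

/-- The reciprocal distance to the nearest integer, truncated at height `n`. -/
def recip (n : ℕ) (t : ℝ) : ℝ := if 1 ≤ n * |fr t| then |fr t|⁻¹ else 0

theorem recip_nonneg (n : ℕ) (t : ℝ) : 0 ≤ recip n t := by
  unfold recip; split_ifs <;> positivity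

theorem abs_trunc_inv_le (n : ℕ) (x : ℝ) : |if 1 ≤ n * |x| then |x|⁻¹ else 0| ≤ n := by
  split_ifs with h
  · have hx : 0 < |x| := by
      by_contra hx
      have : |x| = 0 := le_antisymm (not_lt.mp hx) (abs_nonneg x)
      rw [this] at h; norm_num at h
    rw [abs_inv, abs_abs, inv_le_iff_one_le_mul₀ hx]
    exact h
  · simp

theorem measurable_trunc_inv (n : ℕ) :
    Measurable fun x : ℝ => if 1 ≤ n * |x| then |x|⁻¹ else 0 :=
  Measurable.ite (measurableSet_le measurable_const (measurable_id.norm.const_mul _))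
    measurable_id.norm.inv measurable_const

theorem measurable_recip (n : ℕ) : Measurable (recip n) :=
  (measurable_trunc_inv n).comp measurable_fr

theorem integral_trunc_inv_le {n : ℕ} (hn : 1 ≤ n) :
    ∫ x in (0 : ℝ)..(1 / 2), (if 1 ≤ n * |x| then |x|⁻¹ else 0) ≤ Real.log n := by
  have hn0 : (0 : ℝ) < n := by exact_mod_cast hn
  have hlow : ∀ b : ℝ, 0 ≤ b → b ≤ (n : ℝ)⁻¹ →
      ∫ x in (0 : ℝ)..b, (if 1 ≤ n * |x| then |x|⁻¹ else 0) = 0 := by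
    intro b hb hbn
    rw [intervalIntegral.integral_congr_Ioo_of_le hb (g := fun _ => (0 : ℝ)) fun x hx => ?_]
    · simp
    · have : ¬ 1 ≤ n * |x| := by
        rw [abs_of_pos hx.1, not_le]
        have := mul_lt_mul_of_pos_left (hx.2.trans_le hbn) hn0
        rwa [mul_inv_cancel₀ hn0.ne'] at this
      simp only [if_neg this]
  rcases le_total (1 / 2 : ℝ) (n : ℝ)⁻¹ with h | h
  · rw [hlow _ (by norm_num) h]
    exact Real.log_natCast_nonneg n
  · have hi : ∀ a b : ℝ, IntervalIntegrable (fun x : ℝ => if 1 ≤ n * |x| then |x|⁻¹ else 0)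
        volume a b := by
      intro a b
      rw [intervalIntegrable_iff]
      exact Measure.integrableOn_of_bounded (M := n) (by simp)
        (measurable_trunc_inv n).aestronglyMeasurable
        (Filter.Eventually.of_forall (abs_trunc_inv_le n))
    have hninv : (0 : ℝ) < (n : ℝ)⁻¹ := by positivity
    rw [← intervalIntegral.integral_add_adjacent_intervals (hi 0 (n : ℝ)⁻¹) (hi _ (1 / 2)),
      hlow _ hninv.le le_rfl, zero_add,
      intervalIntegral.integral_congr_Ioo_of_le h (g := fun x => x⁻¹) fun x hx => ?_,
      integral_inv_of_pos hninv (by norm_num)]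
    · refine Real.log_le_log (by positivity) ?_
      rw [div_inv_eq_mul]
      linarith
    · have hx0 : 0 < x := hninv.trans hx.1
      have : 1 ≤ n * |x| := by
        rw [abs_of_pos hx0]
        have := mul_le_mul_of_nonneg_left hx.1.le hn0.le
        rwa [mul_inv_cancel₀ hn0.ne'] at this
      simp only [if_pos this]
      rw [abs_of_pos hx0]

theorem integral_recip_dilate_le {n : ℕ} (hn : 1 ≤ n) :
    ∫ t in Set.Ioc (0 : ℝ) 1, recip n (n * t) ≤ 2 * Real.log n := by
  have hper : Function.Periodic (recip n) 1 := fun t => by simp only [recip, periodic_fr t]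
  have hB : ∀ t, |recip n t| ≤ n := fun t => abs_trunc_inv_le n (fr t)
  have hz : ∀ f : ℝ → ℝ, fc f 0 = ((∫ t in Set.Ioc (0 : ℝ) 1, f t : ℝ) : ℂ) := by
    intro f
    rw [← intervalIntegral.integral_of_le zero_le_one, ← intervalIntegral.integral_ofReal]
    simp [fc]
  have h1 := fc_dilate_of_dvd (measurable_recip n) hB hper hn 0
  have h2 := fc_comp_fr_of_even (measurable_trunc_inv n) (abs_trunc_inv_le n)
    (fun x => by simp) 0
  have h3 : fc (recip n) 0 = ((2 * ∫ x in (0 : ℝ)..(1 / 2),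
      (if 1 ≤ n * |x| then |x|⁻¹ else 0) : ℝ) : ℂ) := by
    refine h2.trans ?_
    simp
  rw [mul_zero, h3, hz] at h1
  rw [Complex.ofReal_injective h1]
  linarith [integral_trunc_inv_le hn]

/-- The distribution of a uniform random point of the unit interval. -/
def unitMeasure : Measure ℝ := volume.restrict (Set.Ioc 0 1)

instance : IsProbabilityMeasure unitMeasure := ⟨by simp [unitMeasure]⟩

/-- The product of the distances of `n β_i` to the nearest integers. -/
def distProd {e : ℕ} (β : Fin e → ℝ) (n : ℕ) : ℝ := ∏ i, |fr (n * β i)|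

theorem distProd_nonneg {e : ℕ} (β : Fin e → ℝ) (n : ℕ) : 0 ≤ distProd β n :=
  prod_nonneg fun _ _ => abs_nonneg _

theorem distProd_le_one {e : ℕ} (β : Fin e → ℝ) (n : ℕ) : distProd β n ≤ 1 :=
  prod_le_one (fun _ _ => abs_nonneg _) fun i _ => (abs_fr_le _).trans (by norm_num)

theorem distProd_le {e : ℕ} (β : Fin e → ℝ) (n : ℕ) (i : Fin e) :
    distProd β n ≤ |fr (n * β i)| := by
  rw [distProd, ← mul_prod_erase univ _ (mem_univ i)]
  exact mul_le_of_le_one_right (abs_nonneg _)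
    (prod_le_one (fun _ _ => abs_nonneg _) fun i _ => (abs_fr_le _).trans (by norm_num))

theorem inv_distProd_eq {e : ℕ} (β : Fin e → ℝ) {n : ℕ} (h : 1 ≤ n * distProd β n) :
    (distProd β n)⁻¹ = ∏ i, recip n (n * β i) := by
  rw [distProd, ← prod_inv_distrib]
  refine prod_congr rfl fun i _ => ?_
  rw [recip, if_pos (h.trans (mul_le_mul_of_nonneg_left (distProd_le β n i) (Nat.cast_nonneg _)))]

theorem integrable_prod_recip (e n : ℕ) :
    Integrable (fun β : Fin e → ℝ => ∏ i, recip n (n * β i))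
      (Measure.pi fun _ => unitMeasure) := by
  refine Integrable.fintype_prod (f := fun _ t => recip n (n * t)) fun _ => ?_
  exact Measure.integrableOn_of_bounded (M := n) (by simp)
    ((measurable_recip n).comp (measurable_const_mul _)).aestronglyMeasurable
    (Filter.Eventually.of_forall fun t => abs_trunc_inv_le n _)

theorem integral_prod_recip_le (e : ℕ) {n K : ℕ} (hn : 1 ≤ n) (hK : n < 2 ^ K) :
    ∫ β : Fin e → ℝ, ∏ i, recip n (n * β i) ∂(Measure.pi fun _ => unitMeasure) ≤
      (2 * (K + 1)) ^ e := by
  rw [integral_fintype_prod_eq_prod (fun _ t => recip n (n * t)), prod_const, card_univ,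
    Fintype.card_fin]
  refine pow_le_pow_left₀ (integral_nonneg fun t => recip_nonneg _ _) ?_ e
  refine (integral_recip_dilate_le hn).trans ?_
  have h1 : Real.log n ≤ K * Real.log 2 := by
    rw [← Real.log_pow]
    exact Real.log_le_log (by exact_mod_cast hn) (by exact_mod_cast hK.le)
  have h2 : (K : ℝ) * Real.log 2 ≤ K * 1 := by
    gcongr
    linarith [Real.log_two_lt_d9]
  linarith

theorem sum_divisors_div_le (K : ℕ) :
    ∑ n ∈ range (2 ^ K), (n.divisors.card : ℝ) * (n : ℝ)⁻¹ ≤ (K + 1) ^ 2 := by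
  have h1 : ∑ n ∈ range (2 ^ K), (n.divisors.card : ℝ) * (n : ℝ)⁻¹ ≤
      ∑ n ∈ Icc (1 : ℕ) (2 ^ K), (n.divisors.card : ℝ) * (n : ℝ)⁻¹ := by
    rw [range_eq_Ico, sum_eq_sum_Ico_succ_bot (by positivity), Nat.cast_zero, inv_zero, mul_zero,
      zero_add]
    exact sum_le_sum_of_subset_of_nonneg Ico_subset_Icc_self fun _ _ _ => by positivity
  refine h1.trans ((sum_card_divisors_mul_le (h := fun n => (n : ℝ)⁻¹)
    (fun k => by positivity) _).trans ?_)
  have h2 : ∑ a ∈ Icc 1 (2 ^ K), ∑ b ∈ Icc 1 (2 ^ K), (((a * b : ℕ) : ℝ))⁻¹ =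
      (∑ a ∈ Icc (1 : ℕ) (2 ^ K), (a : ℝ)⁻¹) ^ 2 := by
    rw [sq, sum_mul_sum]
    simp only [Nat.cast_mul, mul_inv]
  rw [h2]
  refine pow_le_pow_left₀ (sum_nonneg fun _ _ => by positivity) ?_ 2
  refine (sum_inv_le_one_add_log _).trans ?_
  push_cast
  rw [Real.log_pow]
  have : (K : ℝ) * Real.log 2 ≤ K * 1 := by
    gcongr
    linarith [Real.log_two_lt_d9]
  linarith

theorem ae_sum_divisors_div_distProd_le (e : ℕ) :
    ∀ᵐ β : Fin e → ℝ ∂(Measure.pi fun _ => unitMeasure), ∃ H : ℝ, ∀ K : ℕ,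
      ∑ n ∈ range (2 ^ K) with 1 ≤ n * distProd β n,
        n.divisors.card * (n * distProd β n)⁻¹ ≤ H * (K + 1) ^ (e + 3) := by
  set F : ℕ → (Fin e → ℝ) → ℝ := fun K β =>
    ∑ n ∈ range (2 ^ K), n.divisors.card * (n : ℝ)⁻¹ * ∏ i, recip n (n * β i) with hF
  have hterm : ∀ (n : ℕ) (β : Fin e → ℝ),
      0 ≤ n.divisors.card * (n : ℝ)⁻¹ * ∏ i, recip n (n * β i) := fun n β =>
    mul_nonneg (by positivity) (prod_nonneg fun _ _ => recip_nonneg _ _)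
  have hF0 : ∀ K β, 0 ≤ F K β := fun K β => sum_nonneg fun n _ => hterm n β
  have hFint : ∀ K, Integrable (F K) (Measure.pi fun _ => unitMeasure) := fun K =>
    integrable_finsetSum _ fun n _ => (integrable_prod_recip e n).const_mul _
  have hFle : ∀ K, ∫ β, F K β ∂(Measure.pi fun _ => unitMeasure) ≤
      2 ^ e * ((K : ℝ) + 1) ^ (e + 2) := by
    intro K
    simp only [hF]
    rw [integral_finsetSum _ fun n _ => (integrable_prod_recip e n).const_mul _]
    calc _ ≤ ∑ n ∈ range (2 ^ K), n.divisors.card * (n : ℝ)⁻¹ * (2 * ((K : ℝ) + 1)) ^ e := by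
          refine sum_le_sum fun n hn => ?_
          rw [integral_const_mul]
          rcases Nat.eq_zero_or_pos n with rfl | hn0
          · simp
          · exact mul_le_mul_of_nonneg_left
              (integral_prod_recip_le e hn0 (mem_range.mp hn)) (by positivity)
      _ ≤ ((K : ℝ) + 1) ^ 2 * (2 * ((K : ℝ) + 1)) ^ e := by
          rw [← sum_mul]
          gcongr
          exact sum_divisors_div_le K
      _ = _ := by rw [mul_pow]; ring
  have hsum : Summable fun r : ℕ => ∫ β, F (2 ^ r) β * ((2 ^ r + 1 : ℝ) ^ (e + 3))⁻¹
      ∂(Measure.pi fun _ => unitMeasure) := by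
    refine Summable.of_nonneg_of_le
      (fun r => integral_nonneg fun β => mul_nonneg (hF0 _ β) (by positivity)) (fun r => ?_)
      (summable_geometric_two.mul_left ((2 : ℝ) ^ e))
    rw [integral_mul_const]
    have h := hFle (2 ^ r)
    push_cast at h
    calc _ ≤ 2 ^ e * ((2 : ℝ) ^ r + 1) ^ (e + 2) * ((2 ^ r + 1 : ℝ) ^ (e + 3))⁻¹ := by gcongr
      _ = 2 ^ e * ((2 : ℝ) ^ r + 1)⁻¹ := by
          have : (2 : ℝ) ^ r + 1 ≠ 0 := by positivity
          rw [pow_succ _ (e + 2)]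
          field_simp
      _ ≤ 2 ^ e * ((2 : ℝ) ^ r)⁻¹ := by gcongr; linarith
      _ = _ := by rw [one_div, inv_pow]
  filter_upwards [ae_bddAbove_of_summable_integral
    (Q := fun r β => F (2 ^ r) β * ((2 ^ r + 1 : ℝ) ^ (e + 3))⁻¹)
    (fun r => (hFint _).mul_const _) (fun r β => mul_nonneg (hF0 _ β) (by positivity)) hsum]
    with β ⟨C, hC0, hC⟩
  refine ⟨C * 3 ^ (e + 3), fun K => ?_⟩
  obtain ⟨r, hr1, hr2⟩ : ∃ r : ℕ, K ≤ 2 ^ r ∧ 2 ^ r ≤ 2 * (K + 1) := by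
    refine ⟨Nat.log 2 (K + 1) + 1, ?_, ?_⟩
    · have := Nat.lt_pow_succ_log_self (by norm_num : 1 < 2) (K + 1)
      rw [Nat.succ_eq_add_one] at this
      omega
    · have := Nat.pow_log_le_self 2 (by omega : K + 1 ≠ 0)
      rw [pow_succ]
      omega
  have h1 := hC r
  rw [← div_eq_mul_inv, div_le_iff₀ (by positivity)] at h1
  have hr3 : (2 : ℝ) ^ r + 1 ≤ 3 * (K + 1) := by
    have : (2 : ℝ) ^ r ≤ 2 * (K + 1) := by exact_mod_cast hr2
    have : (0 : ℝ) ≤ K := Nat.cast_nonneg _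
    linarith
  calc _ = ∑ n ∈ range (2 ^ K) with 1 ≤ n * distProd β n,
        n.divisors.card * (n : ℝ)⁻¹ * ∏ i, recip n (n * β i) := by
        refine sum_congr rfl fun n hn => ?_
        rw [mul_inv, inv_distProd_eq β (mem_filter.mp hn).2, mul_assoc]
    _ ≤ F K β := sum_le_sum_of_subset_of_nonneg (filter_subset _ _) fun n _ _ => hterm n β
    _ ≤ F (2 ^ r) β := sum_le_sum_of_subset_of_nonneg
        (range_mono (Nat.pow_le_pow_right (by norm_num) hr1)) fun n _ _ => hterm n β
    _ ≤ C * (2 ^ r + 1) ^ (e + 3) := h1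
    _ ≤ C * (3 * (K + 1)) ^ (e + 3) := by gcongr
    _ = _ := by rw [mul_pow]; ring

/-- The contribution of the positive frequency `n`. -/
def posTerm {d : ℕ} (s N : ℕ) (α : Fin d → ℝ) (n : ℕ) : ℝ :=
  if Real.log N ^ s < n * distProd α n then
    sr (n / (N : ℝ) ^ 2) ^ 2 * ((n : ℝ)⁻¹ * ∏ i, sr (fr (n * α i)) ^ 2 / fr (n * α i)) else 0

/-- The sum over the positive frequencies. -/
def posSum {d : ℕ} (s N : ℕ) (α : Fin d → ℝ) : ℝ :=
  ∑ n ∈ range ⌈(N : ℝ) ^ 2 / 4⌉₊, posTerm s N α n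

theorem measurable_distProd (d n : ℕ) : Measurable fun α : Fin d → ℝ => distProd α n := by
  unfold distProd
  exact Finset.measurable_fun_prod _ fun i _ =>
    (measurable_fr.comp ((measurable_pi_apply i).const_mul _)).norm

theorem measurable_posSum (d s N : ℕ) : Measurable fun α : Fin d → ℝ => posSum s N α := by
  unfold posSum posTerm
  refine Finset.measurable_fun_sum _ fun n _ => Measurable.ite ?_ ?_ measurable_const
  · exact measurableSet_lt measurable_const ((measurable_distProd d n).const_mul _)
  · refine (Measurable.const_mul ?_ _).const_mul _
    refine Finset.measurable_fun_prod _ fun i _ => ?_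
    have h : Measurable fun α : Fin d → ℝ => fr (n * α i) :=
      measurable_fr.comp ((measurable_pi_apply i).const_mul _)
    exact ((measurable_sr.comp h).pow_const 2).div h

theorem measurableSet_posSum_le (d s : ℕ) :
    MeasurableSet {α : Fin d → ℝ | ∃ C : ℕ, ∀ N : ℕ, 3 ≤ N → |posSum s N α| ≤ C * Real.log N} := by
  simp only [Set.ofPred_exists, Set.ofPred_forall]
  exact MeasurableSet.iUnion fun C => MeasurableSet.iInter fun N => MeasurableSet.iInter fun _ =>
    measurableSet_le (measurable_posSum d s N).norm measurable_const

theorem one_lt_log_of_three_le {N : ℕ} (hN : 3 ≤ N) : 1 < Real.log N := by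
  rw [Real.lt_log_iff_exp_lt (by positivity)]
  have : (3 : ℝ) ≤ N := by exact_mod_cast hN
  linarith [Real.exp_one_lt_d9]

theorem ceil_sq_div_four_le (N : ℕ) : ⌈(N : ℝ) ^ 2 / 4⌉₊ ≤ N ^ 2 := by
  rw [Nat.ceil_le]
  push_cast
  have : 0 ≤ (N : ℝ) ^ 2 := by positivity
  linarith

theorem ae_posSum_cons_le {e s : ℕ} (hs : (e + 3) * (e + 1) + 3 < s) {β : Fin e → ℝ} {H : ℝ}
    (hH : ∀ K : ℕ, ∑ n ∈ range (2 ^ K) with 1 ≤ n * distProd β n,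
        n.divisors.card * (n * distProd β n)⁻¹ ≤ H * (K + 1) ^ (e + 3)) :
    ∀ᵐ t ∂unitMeasure, ∃ C : ℕ, ∀ N : ℕ, 3 ≤ N →
      |posSum s N (Fin.cons t β : Fin (e + 1) → ℝ)| ≤ C * Real.log N := by
  set c : ℕ → ℝ := fun n => (n : ℝ)⁻¹ * ∏ i, sr (fr (n * β i)) ^ 2 / fr (n * β i) with hc
  have hcb : ∀ n, |c n| ≤ (n * distProd β n)⁻¹ := by
    intro n
    simp only [hc]
    rw [abs_mul, abs_prod, mul_inv, abs_inv, Nat.abs_cast, distProd, ← prod_inv_distrib]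
    refine mul_le_mul_of_nonneg_left ?_ (by positivity)
    exact prod_le_prod (fun _ _ => abs_nonneg _) fun i _ => abs_sr_sq_div_le _
  have h := ae_partial_sums_le (D := e + 2) (s := s) (by omega) (by nlinarith)
    (distProd_nonneg β) (distProd_le_one β) hcb hH
  filter_upwards [h] with t ⟨C, hC0, hC⟩
  obtain ⟨C', hC'⟩ := exists_nat_ge C
  refine ⟨C', fun N hN => ?_⟩
  have hlog := one_lt_log_of_three_le hN
  have hN0 : (0 : ℝ) < (N : ℝ) ^ 2 := by positivity
  set f : ℕ → ℝ := fun n => if n = 0 then 1 else sr (n / (N : ℝ) ^ 2) ^ 2 with hf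
  set y : ℕ → ℝ := fun n => if Real.log N ^ s < n * distProd β n * |fr (n * t)| then
    c n * (sr (fr (n * t)) ^ 2 / fr (n * t)) else 0 with hy
  have hsum : posSum s N (Fin.cons t β : Fin (e + 1) → ℝ) =
      ∑ n ∈ range ⌈(N : ℝ) ^ 2 / 4⌉₊, f n * y n := by
    refine sum_congr rfl fun n _ => ?_
    have hd : distProd (Fin.cons t β : Fin (e + 1) → ℝ) n =
        |fr (n * t)| * distProd β n := by
      simp [distProd, Fin.prod_univ_succ]
    simp only [posTerm, hy, hf, hd, Fin.prod_univ_succ, Fin.cons_zero, Fin.cons_succ, hc]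
    have hlogs : 0 ≤ Real.log N ^ s := by positivity
    by_cases h1 : Real.log N ^ s < n * (|fr (n * t)| * distProd β n)
    · have h2 : Real.log N ^ s < n * distProd β n * |fr (n * t)| := by
        rw [mul_assoc, mul_comm (distProd β n)]; exact h1
      have hn : n ≠ 0 := by
        rintro rfl
        simp only [Nat.cast_zero, zero_mul] at h1
        linarith
      rw [if_pos h1, if_pos h2, if_neg hn]
      ring
    · have h2 : ¬ Real.log N ^ s < n * distProd β n * |fr (n * t)| := by
        rw [mul_assoc, mul_comm (distProd β n)]; exact h1
      rw [if_neg h1, if_neg h2, mul_zero]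
  have hq : ∀ i < ⌈(N : ℝ) ^ 2 / 4⌉₊, (i : ℝ) / (N : ℝ) ^ 2 ≤ 1 / 2 := by
    intro i hi
    rw [Nat.lt_ceil] at hi
    rw [div_le_iff₀ hN0]
    linarith
  have hf1 : ∀ i, f i ≤ 1 := by
    intro i
    simp only [hf]
    split_ifs
    · exact le_rfl
    · rw [← sq_abs]
      exact pow_le_one₀ (abs_nonneg _) (abs_sr_le_one _)
  rw [hsum]
  calc _ ≤ C * Real.log N := by
        refine sum_mul_antitone_abs_le (fun i hi => ?_) (fun i _ => ?_) (fun i _ => hf1 i)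
          (by positivity) fun M hM => hC N hN M (hM.trans (ceil_sq_div_four_le N))
        · rcases Nat.eq_zero_or_pos i with rfl | hi0
          · have : f 0 = 1 := if_pos rfl
            rw [this]
            exact hf1 _
          · simp only [hf]
            rw [if_neg (by omega), if_neg (by omega)]
            have hip : (0 : ℝ) < i := by exact_mod_cast hi0
            refine pow_le_pow_left₀ (sr_nonneg (by positivity) (hq _ hi)) ?_ 2
            refine sr_anti (by positivity) ?_ (hq _ hi)
            push_cast
            gcongr
            linarith
        · simp only [hf]
          split_ifs <;> positivity
    _ ≤ C' * Real.log N := by gcongr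

theorem ae_posSum_le {e s : ℕ} (hs : (e + 3) * (e + 1) + 3 < s) :
    ∀ᵐ α : Fin (e + 1) → ℝ ∂(Measure.pi fun _ => unitMeasure), ∃ C : ℕ, ∀ N : ℕ, 3 ≤ N →
      |posSum s N α| ≤ C * Real.log N := by
  set P : (Fin (e + 1) → ℝ) → Prop := fun α => ∃ C : ℕ, ∀ N : ℕ, 3 ≤ N →
    |posSum s N α| ≤ C * Real.log N with hP
  have hPm : MeasurableSet {α | P α} := measurableSet_posSum_le (e + 1) s
  set φ := MeasurableEquiv.piFinSuccAbove (fun _ : Fin (e + 1) => ℝ) 0 with hφ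
  have hmp := measurePreserving_piFinSuccAbove (fun _ : Fin (e + 1) => unitMeasure) 0
  have hsymm : ∀ z, φ.symm z = (Fin.cons z.1 z.2 : Fin (e + 1) → ℝ) := by
    intro z
    rw [← Fin.insertNth_zero']
    rfl
  have hcm : MeasurableSet {z : ℝ × (Fin e → ℝ) | P (φ.symm z)} := φ.symm.measurable hPm
  have hae : ∀ᵐ β : Fin e → ℝ ∂(Measure.pi fun _ => unitMeasure), ∀ᵐ t ∂unitMeasure,
      P (φ.symm (t, β)) := by
    filter_upwards [ae_sum_divisors_div_distProd_le e] with β ⟨H, hH⟩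
    filter_upwards [ae_posSum_cons_le hs hH] with t ht
    rw [hsymm]
    exact ht
  rw [← Measure.ae_ae_comm (p := fun t β => P (φ.symm (t, β))) hcm] at hae
  have hprod := (Measure.ae_prod_iff_ae_ae hcm).mpr hae
  have := hmp.quasiMeasurePreserving.ae hprod
  filter_upwards [this] with α hα
  have e : φ.symm (φ α) = α := φ.symm_apply_apply α
  rw [← e]
  exact hα

theorem eq_round_of_abs_sub_eq {x : ℝ} (hx : Irrational x) {z : ℤ} (h : |x - z| = |fr x|) :
    z = round x := by
  unfold fr at h
  rcases abs_eq_abs.mp h with h | h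
  · have : (z : ℝ) = round x := by linarith
    exact_mod_cast this
  · exfalso
    refine hx ⟨((z + round x : ℤ) : ℚ) / 2, ?_⟩
    push_cast
    linarith

theorem fr_neg {x : ℝ} (hx : Irrational x) : fr (-x) = -fr x := by
  have h : -round (-x) = round x := by
    refine eq_round_of_abs_sub_eq hx (le_antisymm ?_ (round_le x _))
    have := round_le (-x) (-round x)
    push_cast at this ⊢
    have e₁ : x - -(round (-x) : ℝ) = -(-x - round (-x)) := by ring
    have e₂ : fr x = -(-x - -(round x : ℝ)) := by unfold fr; ring
    rwa [e₁, e₂, abs_neg, abs_neg]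
  have h' : round (-x) = -round x := by omega
  unfold fr
  rw [h']
  push_cast
  ring

theorem ae_irrational (d : ℕ) :
    ∀ᵐ α : Fin d → ℝ ∂(Measure.pi fun _ => unitMeasure), ∀ i, Irrational (α i) := by
  refine ae_all_iff.mpr fun i => ?_
  have h : ∀ᵐ x ∂unitMeasure, Irrational x :=
    ae_restrict_of_ae ((Set.countable_range ((↑) : ℚ → ℝ)).ae_notMem volume)
  exact (Measure.tendsto_eval_ae_ae (μ := fun _ : Fin d => unitMeasure) (i := i)).eventually h

/-- The contribution of the frequencies with first coordinate `m` to the sum over `U4`. -/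
def freqTerm {d : ℕ} (s N : ℕ) (α : Fin d → ℝ) (m : ℤ) : ℝ :=
  if 1 < |(m : ℝ)| ∧ |(m : ℝ)| < (N : ℝ) ^ 2 / 4 ∧
      Real.log N ^ s < |(m : ℝ)| * ∏ i, nid (m * α i) then
    sr (m / (N : ℝ) ^ 2) ^ 2 * ((m : ℝ)⁻¹ * ∏ i, sr (fr (m * α i)) ^ 2 / fr (m * α i))
  else 0

theorem tsum_U4_eq {d : ℕ} (s N : ℕ) {α : Fin d → ℝ} (hα : ∀ i, Irrational (α i)) :
    ∑' n : U4 d s N α, gterm d N α n.1 / ((n.1 0 : ℝ) * ∏ i, th α n.1 i) =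
      ∑' m : ℤ, freqTerm s N α m := by
  set φ : ℤ → Fin (d + 1) → ℤ := fun m => Fin.cons m fun i => round ((m : ℝ) * α i) with hφ
  set Z : Set ℤ := {m | 1 < |(m : ℝ)| ∧ |(m : ℝ)| < (N : ℝ) ^ 2 / 4 ∧
      Real.log N ^ s < |(m : ℝ)| * ∏ i, nid (m * α i)} with hZ
  have hth : ∀ m i, th α (φ m) i = fr (m * α i) := fun m i => by simp [th, hφ, fr]
  have hφ0 : ∀ m, φ m 0 = m := fun m => by simp [hφ]
  have hU : U4 d s N α = φ '' Z := by
    ext n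
    constructor
    · rintro ⟨h1, h2, h3, h4⟩
      refine ⟨n 0, ⟨h1, h2, h4⟩, ?_⟩
      have hn0 : n 0 ≠ 0 := by
        intro h0
        rw [h0] at h1
        norm_num at h1
      refine funext fun j => Fin.cases (hφ0 _) (fun i => ?_) j
      have := eq_round_of_abs_sub_eq ((hα i).intCast_mul hn0) (h3 i)
      simp [hφ, this]
    · rintro ⟨m, ⟨h1, h2, h4⟩, rfl⟩
      refine ⟨?_, ?_, fun i => ?_, ?_⟩
      · rwa [hφ0]
      · rwa [hφ0]
      · rw [hth, hφ0]
        rfl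
      · rwa [hφ0]
  have hinj : Set.InjOn φ Z := fun a _ b _ h => by
    rw [← hφ0 a, h, hφ0]
  rw [hU, tsum_image (fun n => gterm d N α n / ((n 0 : ℝ) * ∏ i, th α n i)) hinj,
    tsum_subtype Z fun m => gterm d N α (φ m) / ((φ m 0 : ℝ) * ∏ i, th α (φ m) i)]
  refine tsum_congr fun m => ?_
  rw [freqTerm, Set.indicator_apply]
  refine if_congr Iff.rfl ?_ rfl
  simp only [gterm, hth, hφ0, Finset.prod_div_distrib]
  rw [div_eq_mul_inv, mul_inv]
  ring

theorem freqTerm_natCast {d s N : ℕ} (hN : 3 ≤ N) (α : Fin d → ℝ) {n : ℕ}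
    (hn : n ∈ range ⌈(N : ℝ) ^ 2 / 4⌉₊) : freqTerm s N α n = posTerm s N α n := by
  rw [Finset.mem_range, Nat.lt_ceil] at hn
  unfold freqTerm posTerm
  simp only [Int.cast_natCast, Nat.abs_cast]
  refine if_congr ⟨fun h => h.2.2, fun h => ⟨?_, hn, h⟩⟩ rfl rfl
  calc (1 : ℝ) ≤ Real.log N ^ s := one_le_pow₀ (one_lt_log_of_three_le hN).le
    _ < n * distProd α n := h
    _ ≤ n * 1 := by gcongr; exact distProd_le_one _ _
    _ = n := mul_one _

theorem freqTerm_neg {d s N : ℕ} {α : Fin d → ℝ} (hα : ∀ i, Irrational (α i)) (m : ℤ) :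
    freqTerm s N α (-m) = (-1) ^ (d + 1) * freqTerm s N α m := by
  rcases eq_or_ne m 0 with rfl | hm
  · simp [freqTerm]
  have hfr : ∀ i, fr (-(m * α i)) = -fr (m * α i) := fun i => fr_neg ((hα i).intCast_mul hm)
  have hnid : ∀ i, nid (-(m * α i)) = nid (m * α i) := fun i => by
    change |fr _| = |fr _|
    rw [hfr, abs_neg]
  unfold freqTerm
  push_cast
  simp only [abs_neg, neg_mul, hnid, hfr, sr_neg, neg_div, div_neg, inv_neg, Finset.prod_neg,
    Finset.card_univ, Fintype.card_fin]
  split_ifs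
  · ring
  · simp

theorem abs_tsum_freqTerm_le {d s N : ℕ} (hN : 3 ≤ N) {α : Fin d → ℝ}
    (hα : ∀ i, Irrational (α i)) : |∑' m : ℤ, freqTerm s N α m| ≤ 2 * |posSum s N α| := by
  have hpos : HasSum (fun n : ℕ => freqTerm s N α n) (posSum s N α) := by
    rw [posSum, ← Finset.sum_congr rfl fun n hn => freqTerm_natCast hN α hn]
    refine hasSum_sum_of_ne_finset_zero fun n hn => if_neg fun h => hn ?_
    rw [Finset.mem_range, Nat.lt_ceil]
    simpa using h.2.1
  have hneg : HasSum (fun n : ℕ => freqTerm s N α (-n)) ((-1) ^ (d + 1) * posSum s N α) := by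
    simp only [freqTerm_neg hα]
    exact hpos.mul_left _
  have h0 : freqTerm s N α 0 = 0 := by simp [freqTerm]
  rw [(hpos.of_nat_of_neg hneg).tsum_eq, h0, sub_zero, two_mul]
  refine (abs_add_le _ _).trans (add_le_add le_rfl ?_)
  rw [abs_mul, abs_pow, abs_neg, abs_one, one_pow, one_mul]

theorem restrict_pi_Icc_eq (d : ℕ) : (volume : Measure (Fin d → ℝ)).restrict
    (Set.univ.pi fun _ : Fin d => Set.Icc (0 : ℝ) 1) = Measure.pi fun _ => unitMeasure := by
  rw [volume_pi, Measure.restrict_pi_pi]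
  congr 1
  funext _
  exact Measure.restrict_congr_set Ioc_ae_eq_Icc.symm

/-- Cancellation of the main terms: for a.e. `α ∈ [0,1]^d`,
`|D̄₅(α,x;N)| = |∑_{n∈U₄} g(n,α;N)/(n₁∏(n₁α_i−n_{i+1}))| ≤ C·log N`. -/
theorem stmt_17 (d : ℕ) (hd : 1 ≤ d) (s : ℕ) (hs : (d + 2) * d + 3 < s) :
    ∀ᵐ α ∂((volume : Measure (Fin d → ℝ)).restrict
        (Set.univ.pi fun _ : Fin d => Set.Icc (0 : ℝ) 1)),
      ∃ C : ℝ, ∀ N : ℕ, 3 ≤ N →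
        |∑' n : U4 d s N α,
            gterm d N α n.1 / ((n.1 0 : ℝ) * ∏ i : Fin d, th α n.1 i)| ≤
          C * Real.log N := by
  obtain ⟨e, rfl⟩ := Nat.exists_eq_add_of_le' hd
  rw [restrict_pi_Icc_eq]
  filter_upwards [ae_irrational (e + 1), ae_posSum_le hs] with α hα ⟨C, hC⟩
  refine ⟨2 * C, fun N hN => ?_⟩
  rw [tsum_U4_eq s N hα, mul_assoc]
  exact (abs_tsum_freqTerm_le hN hα).trans (by gcongr; exact hC N hN)
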